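/- arXiv:2009.08035 — 2 statements merged into one kernel-verified Lean document; each statement's English description precedes it below -/
import Mathlib

section
/- Let n and d be positive integers with gcd(n,d) = 1, let r be an integer, and let a, b, c be indeterminates. Let m satisfy 0 ≤ m ≤ n−1 and d·m ≡ −r (mod n). Then the sum over k from 0 to m of [2dk+r] · (aq^r, q^r/a, bq^r, q^r/b, q^r/c, q^r; q^d)_k / (aq^d, q^d/a, bq^d, q^d/b, cq^d, q^d; q^d)_k · (c·q^{2d−3r})^k is congruent to 0 modulo [n] = (1−q^n)/(1−q), i.e., the numerator of this rational function in q, a, b, c is divisible by [n]. -/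
open Finset

noncomputable section

/-- Polynomial ring in the variables `q, a, b, c` (indices `0,1,2,3`). -/
abbrev R : Type := MvPolynomial (Fin 4) ℚ

/-- Field of rational functions in `q, a, b, c`. -/
abbrev K : Type := FractionRing R

def qv : K := algebraMap R K (MvPolynomial.X 0)
def av : K := algebraMap R K (MvPolynomial.X 1)
def bv : K := algebraMap R K (MvPolynomial.X 2)
def cv : K := algebraMap R K (MvPolynomial.X 3)

/-- The q-shifted factorial `(x; Q)_k = (1-x)(1-xQ)⋯(1-xQ^{k-1})`. -/
def poch (x Q : K) (k : ℕ) : K := ∏ i ∈ Finset.range k, (1 - x * Q ^ i)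

/-- The q-integer `[m] = (1-q^m)/(1-q)` (allowing integer `m`). -/
def qint (m : ℤ) : K := (1 - qv ^ m) / (1 - qv)

/-- The n-th cyclotomic polynomial, as a polynomial in the variable `q`. -/
def Phi (n : ℕ) : R :=
  Polynomial.eval₂ MvPolynomial.C (MvPolynomial.X 0) (Polynomial.cyclotomic n ℚ)

/-- `[n] = 1 + q + ⋯ + q^{n-1}` as a polynomial in `q`. -/
def qintR (n : ℕ) : R := ∑ i ∈ Finset.range n, (MvPolynomial.X 0 : R) ^ i

/-- `x ≡ 0 (mod M)` as rational functions: `x = M·f/g` where `g` shares no prime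
factor with `M` (i.e. the numerator of `x` in lowest terms is divisible by `M`). -/
def modCong (M : R) (x : K) : Prop :=
  ∃ f g : R, g ≠ 0 ∧ (∀ p : R, Prime p → p ∣ M → ¬ p ∣ g) ∧
    x * algebraMap R K g = algebraMap R K (M * f)

/-!
Let `e > 1` divide `n`. Modulo `Φ_e(q)` the parameter `q` becomes a primitive `e`-th root of unity
`ζ`, and the summand becomes `(ζ^(-dk) - ζ^(r+dk)) * ∏_{i<k} h(ζ^(-(r+di))) / h(ζ^(d(i+1)))`, up to
the factor `1 / (1 - ζ)`, for a single function `h` that vanishes at `1`. Write `M = m % e`, so that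
`ζ^r = ζ^(-dM)`. The product is then the generalised binomial coefficient
`∏_{i<k} H(M-i) / H(i+1)` with `H(j) = h(ζ^(dj))`, hence invariant under `k ↦ M - k`, while its
coefficient changes sign, so that the sum over `0 ≤ k ≤ M` vanishes. For `M < k < e` the product
contains the factor `H(0) = 0`.

If `m ≥ e`, both numerator and denominator acquire factors divisible by `Φ_e(q)`. In each block of
`e` consecutive indices there is exactly one of either kind, and they are `1 - q^(eA)` and
`1 - q^(eB)` with `B ≠ 0`, whose quotient is regular at `ζ`. So each block of the sum is, modulo
`Φ_e(q)`, a constant times the sum of the first one. As `[n]` is the product of the coprime primes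
`Φ_e(q)`, this suffices.
-/

section WellPoised

theorem sum_sub_reflect_mul_eq_zero {A : Type*} [CommRing A] (f b : ℕ → A) {M : ℕ}
    (hb : ∀ t ≤ M, b (M - t) = b t) : ∑ t ∈ range (M + 1), (f t - f (M - t)) * b t = 0 := by
  simp only [sub_mul, sum_sub_distrib]
  rw [← sum_range_reflect fun t => f t * b t, sub_eq_zero]
  refine sum_congr rfl fun t ht => ?_
  rw [Nat.add_sub_cancel, hb t (Nat.lt_succ_iff.1 (mem_range.1 ht))]

variable {F : Type*} [Field F]

theorem prod_range_sub_div_prod_range_succ (H : ℕ → F) (s t : ℕ)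
    (hs : ∏ i ∈ range s, H (i + 1) ≠ 0) :
    ∏ i ∈ range t, H (s + t - i) / H (i + 1) =
      (∏ i ∈ range (s + t), H (i + 1)) /
        ((∏ i ∈ range s, H (i + 1)) * ∏ i ∈ range t, H (i + 1)) := by
  have numerator_reflect : ∏ i ∈ range t, H (s + t - i) = ∏ i ∈ range t, H (s + i + 1) := by
    rw [← prod_range_reflect fun i => H (s + i + 1)]
    refine prod_congr rfl fun i hi => congrArg H ?_
    have := mem_range.1 hi
    omega
  rw [prod_div_distrib, numerator_reflect, prod_range_add, mul_div_mul_left _ _ hs]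

/-- The ratio of consecutive terms of a well-poised series in base `q ^ d` with first parameter
`q ^ r`: each parameter contributes a factor to `h`, and the numerator evaluates `h` at the
inverse of `q ^ (r + d * i)`. -/
def wellPoisedRatio (h : F → F) (q : F) (d r : ℤ) (i : ℕ) : F :=
  h (q ^ (-(r + d * i))) / h (q ^ (d * (i + 1)))

/-- The very-well-poised factor `1 - q ^ (2 * d * k + r)`, multiplied by `q ^ (-(d * k))` so that
it is antisymmetric under `k ↦ M - k` when `q ^ (r + d * M) = 1`. -/
def wellPoisedCoeff (q : F) (d r : ℤ) (k : ℕ) : F := q ^ (-(d * k)) - q ^ (r + d * k)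

theorem sum_wellPoised_eq_zero (h : F → F) {q : F} (hq : q ≠ 0) {d r : ℤ} {M : ℕ}
    (hM : q ^ (r + d * M) = 1) (hh : ∀ j < M, h (q ^ (d * (j + 1))) ≠ 0) :
    ∑ t ∈ range (M + 1),
      wellPoisedCoeff q d r t * ∏ i ∈ range t, wellPoisedRatio h q d r i = 0 := by
  let H : ℕ → F := fun j => h (q ^ (d * j))
  have zpow_reflect : ∀ i ≤ M, q ^ (r + d * i) = q ^ (-(d * (M - i : ℕ))) := fun i hi => by
    rw [← mul_one (q ^ (-(d * (M - i : ℕ)))), ← hM, ← zpow_add₀ hq, Nat.cast_sub hi]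
    ring_nf
  have prod_ratio : ∀ t ≤ M, ∏ i ∈ range t, wellPoisedRatio h q d r i =
      (∏ i ∈ range M, H (i + 1)) /
        ((∏ i ∈ range (M - t), H (i + 1)) * ∏ i ∈ range t, H (i + 1)) := fun t ht => by
    have denominator_ne_zero : ∏ i ∈ range (M - t), H (i + 1) ≠ 0 :=
      prod_ne_zero_iff.2 fun i hi => by
        simpa [H] using hh i ((mem_range.1 hi).trans_le (Nat.sub_le M t))
    have binomial := prod_range_sub_div_prod_range_succ H (M - t) t denominator_ne_zero
    rw [Nat.sub_add_cancel ht] at binomial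
    rw [← binomial]
    refine prod_congr rfl fun i hi => ?_
    rw [wellPoisedRatio, zpow_neg, zpow_reflect i ((mem_range.1 hi).le.trans ht), zpow_neg, inv_inv]
    simp only [H, Nat.cast_succ]
  rw [← sum_sub_reflect_mul_eq_zero (fun t => q ^ (-(d * t)))
    (fun t => ∏ i ∈ range t, wellPoisedRatio h q d r i) (M := M)]
  · refine sum_congr rfl fun t ht => ?_
    rw [wellPoisedCoeff, zpow_reflect t (Nat.lt_succ_iff.1 (mem_range.1 ht))]
  · intro t ht
    rw [prod_ratio t ht, prod_ratio (M - t) (Nat.sub_le M t), Nat.sub_sub_self ht, mul_comm]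

end WellPoised

section Residue

variable {A F L : Type*} [CommRing A] [Field F] [Algebra A F] [Field L]

/-- The graph of the extension of `φ` to the local ring of fractions `f / g` with `φ g ≠ 0`. Being a
subring of `F × L`, it is closed under finite sums and products. -/
def residueGraph (F : Type*) [Field F] [Algebra A F] (φ : A →+* L) : Subring (F × L) where
  carrier := {z | ∃ f g : A, φ g ≠ 0 ∧ z.1 * algebraMap A F g = algebraMap A F f ∧
    z.2 * φ g = φ f}
  one_mem' := ⟨1, 1, by simp⟩
  zero_mem' := ⟨0, 1, by simp⟩
  mul_mem' := by
    rintro ⟨x, y⟩ ⟨x', y'⟩ ⟨f, g, hg, hx, hy⟩ ⟨f', g', hg', hx', hy'⟩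
    refine ⟨f * f', g * g', by simp [hg, hg'], ?_, ?_⟩
    · simp only [Prod.fst_mul, map_mul, ← hx, ← hx']; ring
    · simp only [Prod.snd_mul, map_mul, ← hy, ← hy']; ring
  add_mem' := by
    rintro ⟨x, y⟩ ⟨x', y'⟩ ⟨f, g, hg, hx, hy⟩ ⟨f', g', hg', hx', hy'⟩
    refine ⟨f * g' + f' * g, g * g', by simp [hg, hg'], ?_, ?_⟩
    · simp only [Prod.fst_add, map_mul, map_add, ← hx, ← hx']; ring
    · simp only [Prod.snd_add, map_mul, map_add, ← hy, ← hy']; ring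
  neg_mem' := by
    rintro ⟨x, y⟩ ⟨f, g, hg, hx, hy⟩
    exact ⟨-f, g, hg, by simpa using hx, by simpa using hy⟩

/-- `x` is regular at the kernel of `φ`, where it takes the value `y`. -/
def HasResidue (φ : A →+* L) (x : F) (y : L) : Prop := (x, y) ∈ residueGraph F φ

theorem hasResidue_algebraMap (φ : A →+* L) (f : A) : HasResidue φ (algebraMap A F f) (φ f) :=
  ⟨f, 1, by simp⟩

namespace HasResidue

variable {φ : A →+* L} {x x' : F} {y y' : L}

theorem one : HasResidue φ (1 : F) 1 := one_mem _

theorem zero : HasResidue φ (0 : F) 0 := zero_mem _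

theorem add (h : HasResidue φ x y) (h' : HasResidue φ x' y') : HasResidue φ (x + x') (y + y') :=
  add_mem h h'

theorem neg (h : HasResidue φ x y) : HasResidue φ (-x) (-y) := neg_mem h

theorem sub (h : HasResidue φ x y) (h' : HasResidue φ x' y') : HasResidue φ (x - x') (y - y') :=
  sub_mem h h'

theorem mul (h : HasResidue φ x y) (h' : HasResidue φ x' y') : HasResidue φ (x * x') (y * y') :=
  mul_mem h h'

theorem pow (h : HasResidue φ x y) (k : ℕ) : HasResidue φ (x ^ k) (y ^ k) := pow_mem h k

theorem sum {ι : Type*} {s : Finset ι} {u : ι → F} {v : ι → L}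
    (h : ∀ i ∈ s, HasResidue φ (u i) (v i)) : HasResidue φ (∑ i ∈ s, u i) (∑ i ∈ s, v i) := by
  rw [HasResidue, prod_mk_sum]
  exact sum_mem h

theorem prod {ι : Type*} {s : Finset ι} {u : ι → F} {v : ι → L}
    (h : ∀ i ∈ s, HasResidue φ (u i) (v i)) : HasResidue φ (∏ i ∈ s, u i) (∏ i ∈ s, v i) := by
  rw [HasResidue, prod_mk_prod]
  exact prod_mem h

theorem one_sub_pow_div_one_sub (h : HasResidue φ x 1) (hx : x ≠ 1) (k : ℕ) :
    HasResidue φ ((1 - x ^ k) / (1 - x)) (k : L) := by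
  rw [← mul_neg_geom_sum, mul_div_cancel_left₀ _ (sub_ne_zero.2 hx.symm)]
  simpa using sum (s := range k) fun i _ => h.pow i

variable [IsFractionRing A F]

theorem ne_zero (h : HasResidue φ x y) (hy : y ≠ 0) : x ≠ 0 := by
  rintro rfl
  obtain ⟨f, g, hg, hx, hfg⟩ := h
  have hf : f = 0 := IsFractionRing.injective A F (by simpa using hx.symm)
  exact mul_ne_zero hy hg (by simpa [hf] using hfg)

theorem inv (h : HasResidue φ x y) (hy : y ≠ 0) : HasResidue φ x⁻¹ y⁻¹ := by
  have hx := h.ne_zero hy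
  obtain ⟨f, g, hg, hfg, hfg'⟩ := h
  dsimp only at hfg hfg'
  refine ⟨g, f, hfg' ▸ mul_ne_zero hy hg, ?_, ?_⟩
  · rw [← hfg, inv_mul_cancel_left₀ hx]
  · rw [← hfg', inv_mul_cancel_left₀ hy]

theorem div (h : HasResidue φ x y) (h' : HasResidue φ x' y') (hy' : y' ≠ 0) :
    HasResidue φ (x / x') (y / y') := by
  simpa only [div_eq_mul_inv] using h.mul (h'.inv hy')

theorem zpow (h : HasResidue φ x y) (hy : y ≠ 0) : ∀ k : ℤ, HasResidue φ (x ^ k) (y ^ k)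
  | .ofNat k => by simpa using h.pow k
  | .negSucc k => by simpa only [zpow_negSucc] using (h.pow (k + 1)).inv (pow_ne_zero _ hy)

theorem one_sub_zpow_div_one_sub (h : HasResidue φ x 1) (hx : x ≠ 1) (k : ℤ) :
    HasResidue φ ((1 - x ^ k) / (1 - x)) (k : L) := by
  obtain ⟨j, rfl | rfl⟩ := k.eq_nat_or_neg
  · simpa using h.one_sub_pow_div_one_sub hx j
  · have hx0 : x ≠ 0 := h.ne_zero one_ne_zero
    have factored : (1 - x ^ (-(j : ℤ))) / (1 - x) =
        -(x ^ (-(j : ℤ)) * ((1 - x ^ j) / (1 - x))) := by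
      rw [zpow_neg, zpow_natCast]
      field_simp
      ring
    rw [factored]
    simpa using ((h.zpow one_ne_zero (-(j : ℤ))).mul (h.one_sub_pow_div_one_sub hx j)).neg

theorem one_sub_zpow_div_one_sub_zpow (h : HasResidue φ x 1) (hx : x ≠ 1) (j : ℤ) {k : ℤ}
    (hk : (k : L) ≠ 0) : HasResidue φ ((1 - x ^ j) / (1 - x ^ k)) (j / k : L) := by
  rw [← div_div_div_cancel_right₀ (sub_ne_zero.2 hx.symm)]
  exact (h.one_sub_zpow_div_one_sub hx j).div (h.one_sub_zpow_div_one_sub hx k) hk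

theorem exists_prod_div_prod {ι : Type*} {s : Finset ι} {u v : ι → F}
    {u' v' : ι → L} {i j : ι} (hi : i ∈ s) (hj : j ∈ s) (huv : HasResidue φ (u i / v j) y)
    (hu : ∀ k ∈ s, HasResidue φ (u k) (u' k)) (hv : ∀ k ∈ s, HasResidue φ (v k) (v' k))
    (hv' : ∀ k ∈ s, k ≠ j → v' k ≠ 0) :
    ∃ z, HasResidue φ ((∏ k ∈ s, u k) / ∏ k ∈ s, v k) z := by
  classical
  rw [← mul_prod_erase s u hi, ← mul_prod_erase s v hj, mul_div_mul_comm]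
  exact ⟨_, huv.mul <| (prod fun k hk => hu k (mem_of_mem_erase hk)).div
    (prod fun k hk => hv k (mem_of_mem_erase hk)) <|
    prod_ne_zero_iff.2 fun k hk => hv' k (mem_of_mem_erase hk) (ne_of_mem_erase hk)⟩

end HasResidue

end Residue

section Blocks

variable {A F L : Type*} [CommRing A] [Field F] [Algebra A F] [Field L] {φ : A →+* L}
  {e M : ℕ} {v ρ : ℕ → F} {v' ρ' : ℕ → L}

theorem exists_hasResidue_prod_range_mul
    (hblock : ∀ l, ∃ z, HasResidue φ (∏ i ∈ range e, ρ (e * l + i)) z) (l : ℕ) :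
    ∃ z, HasResidue φ (∏ i ∈ range (e * l), ρ i) z := by
  induction l with
  | zero => exact ⟨1, by simpa using HasResidue.one⟩
  | succ l ih =>
    obtain ⟨z, hz⟩ := ih
    obtain ⟨z', hz'⟩ := hblock l
    exact ⟨z * z', by simpa only [mul_add, mul_one, prod_range_add] using hz.mul hz'⟩

theorem sum_range_mul_prod_eq_zero_of_lt (hρM : ρ' M = 0)
    (hsum : ∑ t ∈ range (M + 1), v' t * ∏ i ∈ range t, ρ' i = 0) {N : ℕ} (hN : M < N) :
    ∑ t ∈ range N, v' t * ∏ i ∈ range t, ρ' i = 0 := by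
  rw [← hsum]
  refine (sum_subset (range_subset_range.2 hN) fun t _ ht => ?_).symm
  have hMt : M < t := by simpa using ht
  rw [prod_eq_zero (mem_range.2 hMt) hρM, mul_zero]

theorem not_dvd_mul_add_succ {e l i : ℕ} (hi : i + 1 < e) : ¬ e ∣ e * l + i + 1 := by
  rw [add_assoc, Nat.dvd_add_right (dvd_mul_right e l)]
  exact Nat.not_dvd_of_pos_of_lt i.succ_pos hi

theorem hasResidue_sum_block (hv : ∀ k, HasResidue φ (v k) (v' k))
    (hv' : Function.Periodic v' e) (hρ : ∀ k, ¬ e ∣ k + 1 → HasResidue φ (ρ k) (ρ' k))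
    (hρ' : Function.Periodic ρ' e) {l : ℕ} {z : L}
    (hz : HasResidue φ (∏ i ∈ range (e * l), ρ i) z) {N : ℕ} (hN : N ≤ e)
    (hsum : ∑ t ∈ range N, v' t * ∏ i ∈ range t, ρ' i = 0) :
    HasResidue φ (∑ t ∈ range N, v (e * l + t) * ∏ i ∈ range (e * l + t), ρ i) 0 := by
  have shift : ∀ {w : ℕ → L}, Function.Periodic w e → ∀ t, w (e * l + t) = w t := fun hw t => by
    rw [← hw.map_mod_nat, Nat.mul_add_mod, hw.map_mod_nat]
  have hterm : ∀ t ∈ range N, HasResidue φ (v (e * l + t) * ∏ i ∈ range (e * l + t), ρ i)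
      (z * (v' t * ∏ i ∈ range t, ρ' i)) := fun t ht => by
    have hprod : HasResidue φ (∏ i ∈ range t, ρ (e * l + i)) (∏ i ∈ range t, ρ' i) :=
      .prod fun i hi => by
        have hi' := mem_range.1 hi
        have ht' := mem_range.1 ht
        rw [← shift hρ' i]
        exact hρ _ (not_dvd_mul_add_succ (by omega))
    rw [prod_range_add, mul_left_comm z, ← shift hv' t]
    exact (hv _).mul (hz.mul hprod)
  simpa only [← mul_sum, hsum, mul_zero] using HasResidue.sum hterm

theorem hasResidue_sum_range_of_periodic (hM : M < e) (hv : ∀ k, HasResidue φ (v k) (v' k))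
    (hv' : Function.Periodic v' e) (hρ : ∀ k, ¬ e ∣ k + 1 → HasResidue φ (ρ k) (ρ' k))
    (hρ' : Function.Periodic ρ' e)
    (hblock : ∀ l, ∃ z, HasResidue φ (∏ i ∈ range e, ρ (e * l + i)) z) (hρM : ρ' M = 0)
    (hsum : ∑ t ∈ range (M + 1), v' t * ∏ i ∈ range t, ρ' i = 0) (l : ℕ) :
    HasResidue φ (∑ k ∈ range (e * l + (M + 1)), v k * ∏ i ∈ range k, ρ i) 0 := by
  have initial_block : ∀ l N, M < N → N ≤ e →
      HasResidue φ (∑ t ∈ range N, v (e * l + t) * ∏ i ∈ range (e * l + t), ρ i) 0 :=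
    fun l N hMN hN => by
      obtain ⟨z, hz⟩ := exists_hasResidue_prod_range_mul hblock l
      exact hasResidue_sum_block hv hv' hρ hρ' hz hN
        (sum_range_mul_prod_eq_zero_of_lt hρM hsum hMN)
  have full_blocks : ∀ l, HasResidue φ (∑ k ∈ range (e * l), v k * ∏ i ∈ range k, ρ i) 0 := by
    intro l
    induction l with
    | zero => simpa using HasResidue.zero
    | succ l ih =>
      simpa only [mul_add, mul_one, sum_range_add, add_zero] using
        ih.add (initial_block l e hM le_rfl)
  simpa only [sum_range_add, add_zero] using
    (full_blocks l).add (initial_block l (M + 1) M.lt_succ_self hM)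

end Blocks

section RootOfUnity

variable {L : Type*} [Field L] {ζ : L} {e : ℕ} {d r : ℤ}

theorem zpow_add_mul_of_pow_eq_one (hζ0 : ζ ≠ 0) (hζ : ζ ^ e = 1) (i j : ℤ) :
    ζ ^ (i + j * e) = ζ ^ i := by
  rw [zpow_add₀ hζ0, mul_comm j, zpow_mul, zpow_natCast, hζ, one_zpow, mul_one]

theorem periodic_wellPoisedCoeff (hζ0 : ζ ≠ 0) (hζ : ζ ^ e = 1) :
    Function.Periodic (wellPoisedCoeff ζ d r) e := fun k => by
  rw [wellPoisedCoeff, wellPoisedCoeff, ← zpow_add_mul_of_pow_eq_one hζ0 hζ (-(d * k)) (-d),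
    ← zpow_add_mul_of_pow_eq_one hζ0 hζ (r + d * k) d]
  push_cast
  ring_nf

theorem periodic_wellPoisedRatio (h : L → L) (hζ0 : ζ ≠ 0) (hζ : ζ ^ e = 1) :
    Function.Periodic (wellPoisedRatio h ζ d r) e := fun i => by
  rw [wellPoisedRatio, wellPoisedRatio, ← zpow_add_mul_of_pow_eq_one hζ0 hζ (-(r + d * i)) (-d),
    ← zpow_add_mul_of_pow_eq_one hζ0 hζ (d * (i + 1)) d]
  push_cast
  ring_nf

theorem one_sub_zpow_mul_succ_ne_zero (hζ : IsPrimitiveRoot ζ e) (hde : IsCoprime d e) {i : ℕ}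
    (hi : ¬ e ∣ i + 1) : 1 - ζ ^ (d * (i + 1)) ≠ 0 := fun h => hi <| by
  have hdvd := (hζ.zpow_eq_one_iff_dvd _).1 (sub_eq_zero.1 h).symm
  exact_mod_cast hde.symm.dvd_of_dvd_mul_left hdvd

variable {A F : Type*} [CommRing A] [Field F] [Algebra A F] [IsFractionRing A F]
  {φ : A →+* L} {q : F} {g : F → F} {g' : L → L}

theorem exists_hasResidue_prod_one_sub_div_prod_one_sub [CharZero L] (hq : HasResidue φ q ζ)
    (hζ : IsPrimitiveRoot ζ e) (hqe : q ^ e ≠ 1) (hd : d ≠ 0) (hde : IsCoprime d e) {M : ℕ}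
    (hM : M < e) (hdvd : (e : ℤ) ∣ r + d * M) (l : ℕ) :
    ∃ z, HasResidue φ ((∏ i ∈ range e, (1 - q ^ (-(r + d * (e * l + i : ℕ))))) /
      ∏ i ∈ range e, (1 - q ^ (d * ((e * l + i : ℕ) + 1)))) z := by
  have he : 0 < e := hM.pos
  have hqe' : HasResidue φ (q ^ e) 1 := hζ.pow_eq_one ▸ hq.pow e
  have one_sub_zpow : ∀ j : ℤ, HasResidue φ (1 - q ^ j) (1 - ζ ^ j) := fun j =>
    .sub .one (hq.zpow (hζ.ne_zero he.ne') j)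
  obtain ⟨B, hB⟩ := hdvd
  have numerator_zero : q ^ (-(r + d * (e * l + M : ℕ))) = (q ^ e) ^ (-(B + d * l)) := by
    rw [← zpow_natCast q e, ← zpow_mul]
    congr 1
    push_cast
    linear_combination -hB
  have denominator_zero : q ^ (d * ((e * l + (e - 1) : ℕ) + 1)) = (q ^ e) ^ (d * (l + 1)) := by
    rw [← zpow_natCast q e, ← zpow_mul]
    congr 1
    push_cast [he]
    ring
  have quotient_of_zeros : HasResidue φ ((1 - q ^ (-(r + d * (e * l + M : ℕ)))) /
      (1 - q ^ (d * ((e * l + (e - 1) : ℕ) + 1))))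
      (((-(B + d * l) : ℤ) : L) / ((d * (l + 1) : ℤ) : L)) := by
    rw [numerator_zero, denominator_zero]
    refine hqe'.one_sub_zpow_div_one_sub_zpow hqe _ (Int.cast_ne_zero.2 (mul_ne_zero hd ?_))
    positivity
  refine HasResidue.exists_prod_div_prod (mem_range.2 hM)
    (mem_range.2 (Nat.sub_lt he one_pos)) quotient_of_zeros (fun i _ => one_sub_zpow _)
    (fun i _ => one_sub_zpow _) fun i hi hne =>
      one_sub_zpow_mul_succ_ne_zero hζ hde (not_dvd_mul_add_succ ?_)
  have := mem_range.1 hi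
  omega

theorem exists_hasResidue_prod_wellPoisedRatio [CharZero L] (hq : HasResidue φ q ζ)
    (hζ : IsPrimitiveRoot ζ e) (hqe : q ^ e ≠ 1) (hd : d ≠ 0) (hde : IsCoprime d e)
    (hg : ∀ j : ℤ, HasResidue φ (g (q ^ j)) (g' (ζ ^ j))) (hg' : ∀ j : ℤ, g' (ζ ^ j) ≠ 0)
    {M : ℕ} (hM : M < e) (hdvd : (e : ℤ) ∣ r + d * M) (l : ℕ) :
    ∃ z, HasResidue φ
      (∏ i ∈ range e, wellPoisedRatio (fun p => g p * (1 - p)) q d r (e * l + i)) z := by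
  have regular_part := HasResidue.prod (s := range e) fun i _ =>
    (hg (-(r + d * (e * l + i : ℕ)))).div (hg (d * ((e * l + i : ℕ) + 1))) (hg' _)
  obtain ⟨z, singular_part⟩ :=
    exists_hasResidue_prod_one_sub_div_prod_one_sub hq hζ hqe hd hde hM hdvd l
  simp only [wellPoisedRatio, mul_div_mul_comm, prod_mul_distrib]
  rw [prod_div_distrib (f := fun i => 1 - q ^ (-(r + d * (e * l + i : ℕ))))]
  exact ⟨_, regular_part.mul singular_part⟩

theorem dvd_add_mul_mod {m : ℕ} (h : (e : ℤ) ∣ r + d * m) : (e : ℤ) ∣ r + d * (m % e : ℕ) := by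
  have split_m : ((m % e : ℕ) : ℤ) + e * (m / e : ℕ) = m := mod_cast Nat.mod_add_div m e
  rwa [← split_m, mul_add, ← add_assoc, mul_left_comm, dvd_add_left (dvd_mul_right _ _)] at h

theorem hasResidue_sum_wellPoised [CharZero L] (hq : HasResidue φ q ζ)
    (hζ : IsPrimitiveRoot ζ e) (hqe : q ^ e ≠ 1) (hd : d ≠ 0) (hde : IsCoprime d e)
    (hg : ∀ j : ℤ, HasResidue φ (g (q ^ j)) (g' (ζ ^ j))) (hg' : ∀ j : ℤ, g' (ζ ^ j) ≠ 0)
    {m : ℕ} (hdvd : (e : ℤ) ∣ r + d * m) :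
    HasResidue φ (∑ k ∈ range (m + 1), wellPoisedCoeff q d r k *
      ∏ i ∈ range k, wellPoisedRatio (fun p => g p * (1 - p)) q d r i) 0 := by
  have he : 0 < e := Nat.pos_of_ne_zero fun h => hqe (by rw [h, pow_zero])
  have hζ0 : ζ ≠ 0 := hζ.ne_zero he.ne'
  have hM : m % e < e := Nat.mod_lt m he
  have hdvdM : (e : ℤ) ∣ r + d * (m % e : ℕ) := dvd_add_mul_mod hdvd
  have hζM : ζ ^ (r + d * (m % e : ℕ)) = 1 := (hζ.zpow_eq_one_iff_dvd _).2 hdvdM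
  have denominator_ne_zero : ∀ i : ℕ, ¬ e ∣ i + 1 →
      g' (ζ ^ (d * (i + 1))) * (1 - ζ ^ (d * (i + 1))) ≠ 0 := fun i hi =>
    mul_ne_zero (hg' _) (one_sub_zpow_mul_succ_ne_zero hζ hde hi)
  have factor : ∀ j : ℤ, HasResidue φ (g (q ^ j) * (1 - q ^ j)) (g' (ζ ^ j) * (1 - ζ ^ j)) :=
    fun j => (hg j).mul (.sub .one (hq.zpow hζ0 j))
  have coeff : ∀ k, HasResidue φ (wellPoisedCoeff q d r k) (wellPoisedCoeff ζ d r k) := fun k =>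
    (hq.zpow hζ0 _).sub (hq.zpow hζ0 _)
  have ratio : ∀ i, ¬ e ∣ i + 1 →
      HasResidue φ (wellPoisedRatio (fun p => g p * (1 - p)) q d r i)
        (wellPoisedRatio (fun p => g' p * (1 - p)) ζ d r i) := fun i hi =>
    (factor _).div (factor _) (denominator_ne_zero i hi)
  have ratio_eq_zero : wellPoisedRatio (fun p => g' p * (1 - p)) ζ d r (m % e) = 0 := by
    simp only [wellPoisedRatio, zpow_neg, hζM, inv_one, sub_self, mul_zero, zero_div]
  have sum_zero := sum_wellPoised_eq_zero (fun p => g' p * (1 - p)) hζ0 hζM fun j hj =>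
    denominator_ne_zero j (Nat.not_dvd_of_pos_of_lt j.succ_pos (hM.trans_le' hj))
  have total := hasResidue_sum_range_of_periodic hM coeff
    (periodic_wellPoisedCoeff hζ0 hζ.pow_eq_one) ratio
    (periodic_wellPoisedRatio _ hζ0 hζ.pow_eq_one)
    (exists_hasResidue_prod_wellPoisedRatio hq hζ hqe hd hde hg hg' hM hdvdM)
    ratio_eq_zero sum_zero (m / e)
  rwa [← add_assoc, Nat.div_add_mod] at total

end RootOfUnity

section Reduction

theorem modCong_iff_dvd_num {M : R} (hM : M ≠ 0) {x : K} :
    modCong M x ↔ M ∣ IsFractionRing.num R x := by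
  have hx : x * algebraMap R K (IsFractionRing.den R x) =
      algebraMap R K (IsFractionRing.num R x) := by
    have := IsLocalization.mk'_spec K (IsFractionRing.num R x) (IsFractionRing.den R x)
    rwa [IsFractionRing.mk'_num_den] at this
  constructor
  · rintro ⟨f, g, -, hg, hfg⟩
    have hMg : IsRelPrime M g :=
      UniqueFactorizationMonoid.isRelPrime_iff_no_prime_factors hM |>.2
        fun p hpM hpg hp => hg p hp hpM hpg
    refine hMg.dvd_of_dvd_mul_right ⟨f * IsFractionRing.den R x, IsFractionRing.injective R K ?_⟩
    rw [map_mul, ← hx, mul_right_comm, hfg]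
    simp only [map_mul, mul_assoc]
  · rintro ⟨f, hf⟩
    refine ⟨f, IsFractionRing.den R x, nonZeroDivisors.coe_ne_zero _, fun p hp hpM hpd => ?_, ?_⟩
    · exact hp.not_isUnit (IsFractionRing.num_den_reduced R x (hpM.trans ⟨f, hf⟩) hpd)
    · rw [hx, hf]

theorem modCong_of_hasResidue_zero {L : Type*} [Field L] {φ : R →+* L} {p : R} (hp : Prime p)
    (hφ : ∀ f, φ f = 0 ↔ p ∣ f) {x : K} (hx : HasResidue φ x 0) : modCong p x := by
  obtain ⟨f, g, hg, hxf, hf⟩ := hx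
  obtain ⟨f', rfl⟩ := (hφ f).1 (by simpa using hf.symm)
  refine ⟨f', g, fun h => hg (by rw [h, map_zero]), fun p' hp' hdvd hp'g => hg ?_, hxf⟩
  exact (hφ g).2 ((hp'.associated_of_dvd hp hdvd).symm.dvd.trans hp'g)

theorem prime_eval₂_C_X {σ k : Type*} [CommRing k] (i : σ) {p : Polynomial k} (hp : Prime p) :
    Prime (p.eval₂ MvPolynomial.C (MvPolynomial.X i : MvPolynomial σ k)) := by
  let E := MvPolynomial.uniqueAlgEquiv k ({i} : Set σ)
  have rename_eq : MvPolynomial.rename ((↑) : ({i} : Set σ) → σ) (E.symm p) =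
      p.eval₂ MvPolynomial.C (MvPolynomial.X i) := by
    clear hp
    induction p using Polynomial.induction_on' with
    | add p₁ p₂ h₁ h₂ => simp only [map_add, Polynomial.eval₂_add, h₁, h₂]
    | monomial n a => simp [E, ← Polynomial.C_mul_X_pow_eq_monomial]
  rw [← rename_eq, MvPolynomial.prime_rename_iff]
  exact (MulEquiv.prime_iff E.symm).2 hp

theorem prime_Phi {e : ℕ} (he : 0 < e) : Prime (Phi e) :=
  prime_eval₂_C_X 0 (Polynomial.cyclotomic.irreducible_rat he).prime

theorem qintR_eq_prod_Phi {n : ℕ} (hn : 0 < n) : qintR n = ∏ e ∈ n.divisors.erase 1, Phi e := by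
  have h := congrArg (Polynomial.eval₂RingHom MvPolynomial.C (MvPolynomial.X 0 : R))
    (Polynomial.prod_cyclotomic_eq_geom_sum hn ℚ)
  simpa [Phi, qintR] using h.symm

theorem isCoprime_Phi {i j : ℕ} (hij : i ≠ j) : IsCoprime (Phi i) (Phi j) :=
  (Polynomial.cyclotomic.isCoprime_rat hij).map (Polynomial.eval₂RingHom MvPolynomial.C _)

theorem modCong_qintR_of_forall_Phi {n : ℕ} (hn : 0 < n) {x : K}
    (h : ∀ e, e ∣ n → 1 < e → modCong (Phi e) x) : modCong (qintR n) x := by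
  have Phi_ne_zero : ∀ e ∈ n.divisors.erase 1, Phi e ≠ 0 := fun e he =>
    (prime_Phi (Nat.pos_of_mem_divisors (mem_of_mem_erase he))).ne_zero
  rw [qintR_eq_prod_Phi hn, modCong_iff_dvd_num (prod_ne_zero_iff.2 Phi_ne_zero)]
  refine prod_dvd_of_coprime (fun i _ j _ hij => isCoprime_Phi hij) fun e he => ?_
  have hen := mem_of_mem_erase he
  exact (modCong_iff_dvd_num (Phi_ne_zero e he)).1 <|
    h e (Nat.dvd_of_mem_divisors hen)
      (lt_of_le_of_ne (Nat.pos_of_mem_divisors hen) (ne_of_mem_erase he).symm)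

theorem not_Phi_dvd_of_isUnit_map {e : ℕ} (he : 0 < e) {f : R} (ψ : R →+* Polynomial ℚ)
    (hψ : ψ (MvPolynomial.X 0) = Polynomial.X) (hf : IsUnit (ψ f)) : ¬ Phi e ∣ f := fun h => by
  have map_Phi : ψ (Phi e) = Polynomial.cyclotomic e ℚ := by
    rw [Phi, Polynomial.hom_eval₂, hψ, Subsingleton.elim (ψ.comp MvPolynomial.C) Polynomial.C,
      Polynomial.eval₂_C_X]
  exact (Polynomial.cyclotomic.irreducible_rat he).not_isUnit
    (isUnit_of_dvd_unit (map_Phi ▸ map_dvd ψ h) hf)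

theorem qv_pow_ne_one {j : ℕ} (hj : j ≠ 0) : qv ^ j ≠ 1 := fun h => by
  rw [qv, ← map_pow, ← map_one (algebraMap R K)] at h
  have := congrArg (MvPolynomial.aeval fun _ => (0 : ℚ)) (IsFractionRing.injective R K h)
  simp [hj] at this

section Hom

variable {L : Type*} [Field L] {φ : R →+* L} {e : ℕ}

theorem isPrimitiveRoot_map_X_zero [CharZero L] (he : 0 < e) (hφ : φ (Phi e) = 0) :
    IsPrimitiveRoot (φ (MvPolynomial.X 0)) e := by
  have : NeZero (e : L) := ⟨Nat.cast_ne_zero.2 he.ne'⟩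
  rw [← Polynomial.isRoot_cyclotomic_iff, Polynomial.IsRoot.def,
    ← Polynomial.map_cyclotomic e (φ.comp MvPolynomial.C), Polynomial.eval_map,
    ← Polynomial.hom_eval₂]
  exact hφ

theorem map_X_ne_zero (he : 0 < e) (hφ : ∀ f, φ f = 0 ↔ Phi e ∣ f) {i : Fin 4} (hi : i ≠ 0) :
    φ (MvPolynomial.X i) ≠ 0 := fun h =>
  not_Phi_dvd_of_isUnit_map he
    (MvPolynomial.eval₂Hom Polynomial.C fun j => if j = 0 then Polynomial.X else 1) (by simp)
    (by simp [hi]) ((hφ _).1 h)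

theorem map_X_pow_ne_one (he : 0 < e) (hφ : ∀ f, φ f = 0 ↔ Phi e ∣ f) {i : Fin 4} (hi : i ≠ 0) :
    φ (MvPolynomial.X i) ^ e ≠ 1 := fun h =>
  not_Phi_dvd_of_isUnit_map (f := MvPolynomial.X i ^ e - 1) he
    (MvPolynomial.eval₂Hom Polynomial.C fun j => if j = 0 then Polynomial.X else 0) (by simp)
    (by simp [hi, he.ne']) ((hφ _).1 (by simp [h]))

end Hom

end Reduction

section Weight

variable {F : Type*} [Field F]

/-- The contribution of the parameters `a`, `1/a`, `b`, `1/b`, `c` to the ratio of consecutive terms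
of the series, normalised by `p ^ 3` so that inverting `p` turns denominators into numerators. -/
def parameterWeight (a b c p : F) : F :=
  (1 - a * p) * (1 - p / a) * (1 - b * p) * (1 - p / b) * (1 - c * p) / p ^ 3

theorem parameterWeight_inv_mul_div {a b c x : F} (ha : a ≠ 0) (hb : b ≠ 0) (hc : c ≠ 0)
    (hx : x ≠ 0) (y : F) :
    parameterWeight a b c x⁻¹ * (1 - x⁻¹) / (parameterWeight a b c y * (1 - y)) =
      (1 - a * x) * (1 - x / a) * (1 - b * x) * (1 - x / b) * (1 - x / c) * (1 - x) /
        ((1 - a * y) * (1 - y / a) * (1 - b * y) * (1 - y / b) * (1 - c * y) * (1 - y)) *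
        (c * (y ^ 3 / x ^ 3)) := by
  have numerator : parameterWeight a b c x⁻¹ * (1 - x⁻¹) =
      (1 - a * x) * (1 - x / a) * (1 - b * x) * (1 - x / b) * (1 - x / c) * (1 - x) *
        (c / x ^ 3) := by
    rw [parameterWeight]
    field_simp
    ring
  rw [numerator, parameterWeight, div_mul_eq_mul_div, div_div_eq_mul_div]
  ring

variable {A L : Type*} [CommRing A] [Algebra A F] [IsFractionRing A F] [Field L] {φ : A →+* L}

theorem hasResidue_parameterWeight {a b c p : F} {α β γ π : L} (ha : HasResidue φ a α)
    (hb : HasResidue φ b β) (hc : HasResidue φ c γ) (hp : HasResidue φ p π) (hα : α ≠ 0)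
    (hβ : β ≠ 0) (hπ : π ≠ 0) :
    HasResidue φ (parameterWeight a b c p) (parameterWeight α β γ π) :=
  (((((HasResidue.one.sub (ha.mul hp)).mul (.sub .one (hp.div ha hα))).mul
    (.sub .one (hb.mul hp))).mul (.sub .one (hp.div hb hβ))).mul (.sub .one (hc.mul hp))).div
    (hp.pow 3) (pow_ne_zero 3 hπ)

theorem parameterWeight_ne_zero {a b c p : F} {e : ℕ} (ha : a ≠ 0) (hb : b ≠ 0)
    (hae : a ^ e ≠ 1) (hbe : b ^ e ≠ 1) (hce : c ^ e ≠ 1) (hp : p ≠ 0) (hpe : p ^ e = 1) :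
    parameterWeight a b c p ≠ 0 := by
  have mul_ne_one : ∀ x : F, x ^ e ≠ 1 → 1 - x * p ≠ 0 := fun x hx h => hx <| by
    calc x ^ e = (x * p) ^ e := by rw [mul_pow, hpe, mul_one]
      _ = 1 := by rw [← sub_eq_zero.1 h, one_pow]
  have div_ne_one : ∀ x : F, x ≠ 0 → x ^ e ≠ 1 → 1 - p / x ≠ 0 := fun x hx0 hx h => hx <| by
    rw [← (div_eq_one_iff_eq hx0).1 (sub_eq_zero.1 h).symm, hpe]
  simp [parameterWeight, mul_ne_one a hae, mul_ne_one b hbe, mul_ne_one c hce,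
    div_ne_one a ha hae, div_ne_one b hb hbe, hp]

end Weight

section Congruence

/-- `parameterWeight` in the indeterminates `a`, `b`, `c`, together with the factor `1 - p` coming
from the first parameter. -/
abbrev seriesWeight (p : K) : K := parameterWeight av bv cv p * (1 - p)

theorem qv_ne_zero : qv ≠ 0 := by simp [qv]

theorem av_ne_zero : av ≠ 0 := by simp [av]

theorem bv_ne_zero : bv ≠ 0 := by simp [bv]

theorem cv_ne_zero : cv ≠ 0 := by simp [cv]

theorem ratio_eq_zpow_mul_wellPoisedRatio (d r : ℤ) (i : ℕ) :
    (1 - av * qv ^ r * (qv ^ d) ^ i) * (1 - qv ^ r / av * (qv ^ d) ^ i) *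
          (1 - bv * qv ^ r * (qv ^ d) ^ i) * (1 - qv ^ r / bv * (qv ^ d) ^ i) *
          (1 - qv ^ r / cv * (qv ^ d) ^ i) * (1 - qv ^ r * (qv ^ d) ^ i) /
        ((1 - av * qv ^ d * (qv ^ d) ^ i) * (1 - qv ^ d / av * (qv ^ d) ^ i) *
          (1 - bv * qv ^ d * (qv ^ d) ^ i) * (1 - qv ^ d / bv * (qv ^ d) ^ i) *
          (1 - cv * qv ^ d * (qv ^ d) ^ i) * (1 - qv ^ d * (qv ^ d) ^ i)) *
        (cv * qv ^ (2 * d - 3 * r)) =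
      qv ^ (-d) * wellPoisedRatio seriesWeight qv d r i := by
  have numerator_pow : qv ^ (r + d * i) = qv ^ r * (qv ^ d) ^ i := by
    rw [zpow_add₀ qv_ne_zero, zpow_mul, zpow_natCast]
  have denominator_pow : qv ^ (d * (i + 1)) = qv ^ d * (qv ^ d) ^ i := by
    rw [mul_add_one, add_comm, zpow_add₀ qv_ne_zero, zpow_mul, zpow_natCast]
  have argument_pow : qv ^ (2 * d - 3 * r) =
      qv ^ (-d) * ((qv ^ d * (qv ^ d) ^ i) ^ 3 / (qv ^ r * (qv ^ d) ^ i) ^ 3) := by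
    rw [← numerator_pow, ← denominator_pow, ← zpow_natCast, ← zpow_natCast, ← zpow_mul, ← zpow_mul,
      ← zpow_sub₀ qv_ne_zero, ← zpow_add₀ qv_ne_zero]
    push_cast
    ring_nf
  have hx : qv ^ r * (qv ^ d) ^ i ≠ 0 := numerator_pow ▸ zpow_ne_zero _ qv_ne_zero
  rw [wellPoisedRatio, zpow_neg qv (r + d * i), numerator_pow, denominator_pow,
    parameterWeight_inv_mul_div av_ne_zero bv_ne_zero cv_ne_zero hx, argument_pow]
  simp only [mul_div_right_comm, ← mul_assoc]
  ring

theorem summand_eq_wellPoised (d r : ℤ) (k : ℕ) :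
    qint (2 * d * k + r) *
          (poch (av * qv ^ r) (qv ^ d) k * poch (qv ^ r / av) (qv ^ d) k *
            poch (bv * qv ^ r) (qv ^ d) k * poch (qv ^ r / bv) (qv ^ d) k *
            poch (qv ^ r / cv) (qv ^ d) k * poch (qv ^ r) (qv ^ d) k) /
          (poch (av * qv ^ d) (qv ^ d) k * poch (qv ^ d / av) (qv ^ d) k *
            poch (bv * qv ^ d) (qv ^ d) k * poch (qv ^ d / bv) (qv ^ d) k *
            poch (cv * qv ^ d) (qv ^ d) k * poch (qv ^ d) (qv ^ d) k) *
          (cv * qv ^ (2 * d - 3 * r)) ^ k =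
      wellPoisedCoeff qv d r k * (∏ i ∈ range k, wellPoisedRatio seriesWeight qv d r i) /
        (1 - qv) := by
  have coeff : qint (2 * d * k + r) * (qv ^ (-d)) ^ k = wellPoisedCoeff qv d r k / (1 - qv) := by
    rw [qint, wellPoisedCoeff, div_mul_eq_mul_div, sub_mul, one_mul, ← zpow_natCast, ← zpow_mul,
      ← zpow_add₀ qv_ne_zero]
    ring_nf
  have ratio := prod_congr (rfl : range k = range k) fun i _ =>
    ratio_eq_zpow_mul_wellPoisedRatio d r i
  simp only [prod_mul_distrib, prod_div_distrib, prod_const, card_range] at ratio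
  simp only [poch]
  rw [mul_div_assoc, mul_assoc, mul_pow, ratio, ← mul_assoc, coeff, div_mul_eq_mul_div]

theorem hasResidue_sum_seriesWeight {L : Type*} [Field L] [CharZero L] {φ : R →+* L} {d r : ℤ}
    {e m : ℕ} (he : 0 < e) (hφ : ∀ f, φ f = 0 ↔ Phi e ∣ f) (hd : d ≠ 0) (hde : IsCoprime d e)
    (hdvd : (e : ℤ) ∣ r + d * m) :
    HasResidue φ (∑ k ∈ range (m + 1), wellPoisedCoeff qv d r k *
      ∏ i ∈ range k, wellPoisedRatio seriesWeight qv d r i) 0 := by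
  have hζ : IsPrimitiveRoot (φ (MvPolynomial.X 0)) e :=
    isPrimitiveRoot_map_X_zero he ((hφ _).2 dvd_rfl)
  have hζ0 : φ (MvPolynomial.X 0) ≠ 0 := hζ.ne_zero he.ne'
  have hq : HasResidue φ qv (φ (MvPolynomial.X 0)) := hasResidue_algebraMap φ _
  have ha : HasResidue φ av (φ (MvPolynomial.X 1)) := hasResidue_algebraMap φ _
  have hb : HasResidue φ bv (φ (MvPolynomial.X 2)) := hasResidue_algebraMap φ _
  have hc : HasResidue φ cv (φ (MvPolynomial.X 3)) := hasResidue_algebraMap φ _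
  have ha0 : φ (MvPolynomial.X 1) ≠ 0 := map_X_ne_zero he hφ (by decide)
  have hb0 : φ (MvPolynomial.X 2) ≠ 0 := map_X_ne_zero he hφ (by decide)
  have zpow_pow_eq_one : ∀ j : ℤ, (φ (MvPolynomial.X 0) ^ j) ^ e = 1 := fun j => by
    rw [← zpow_natCast, zpow_comm, zpow_natCast, hζ.pow_eq_one, one_zpow]
  exact hasResidue_sum_wellPoised hq hζ (qv_pow_ne_one he.ne') hd hde
    (fun j => hasResidue_parameterWeight ha hb hc (hq.zpow hζ0 j) ha0 hb0 (zpow_ne_zero j hζ0))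
    (fun j => parameterWeight_ne_zero ha0 hb0 (map_X_pow_ne_one he hφ (by decide))
      (map_X_pow_ne_one he hφ (by decide)) (map_X_pow_ne_one he hφ (by decide))
      (zpow_ne_zero j hζ0) (zpow_pow_eq_one j)) hdvd

theorem modCong_Phi_sum_seriesWeight {d r : ℤ} {e m : ℕ} (he : 1 < e) (hd : d ≠ 0)
    (hde : IsCoprime d e) (hdvd : (e : ℤ) ∣ r + d * m) :
    modCong (Phi e) (∑ k ∈ range (m + 1), wellPoisedCoeff qv d r k *
      (∏ i ∈ range k, wellPoisedRatio seriesWeight qv d r i) / (1 - qv)) := by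
  have he0 : 0 < e := one_pos.trans he
  let I : Ideal R := Ideal.span {Phi e}
  have : I.IsPrime := (Ideal.span_singleton_prime (prime_Phi he0).ne_zero).2 (prime_Phi he0)
  let φ : R →+* I.ResidueField := algebraMap R I.ResidueField
  have : CharZero I.ResidueField :=
    charZero_of_injective_ringHom (φ.comp MvPolynomial.C).injective
  have hφ : ∀ f, φ f = 0 ↔ Phi e ∣ f := fun f => by
    rw [Ideal.algebraMap_residueField_eq_zero, Ideal.mem_span_singleton]
  have hζ : IsPrimitiveRoot (φ (MvPolynomial.X 0)) e :=
    isPrimitiveRoot_map_X_zero he0 ((hφ _).2 dvd_rfl)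
  have quotient := (hasResidue_sum_seriesWeight he0 hφ hd hde hdvd).div
    (HasResidue.one.sub (hasResidue_algebraMap φ (MvPolynomial.X 0)))
    (sub_ne_zero.2 (hζ.ne_one he).symm)
  rw [zero_div] at quotient
  rw [← sum_div]
  exact modCong_of_hasResidue_zero (prime_Phi he0) hφ quotient

theorem stmt1_general (n : ℕ) (d : ℤ) (hn : 0 < n) (hd : d ≠ 0) (hnd : IsCoprime d n) (r : ℤ)
    (m : ℕ) (hmr : d * m ≡ -r [ZMOD n]) :
    modCong (qintR n)
      (∑ k ∈ range (m + 1),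
        qint (2 * d * k + r) *
          (poch (av * qv ^ r) (qv ^ d) k * poch (qv ^ r / av) (qv ^ d) k *
            poch (bv * qv ^ r) (qv ^ d) k * poch (qv ^ r / bv) (qv ^ d) k *
            poch (qv ^ r / cv) (qv ^ d) k * poch (qv ^ r) (qv ^ d) k) /
          (poch (av * qv ^ d) (qv ^ d) k * poch (qv ^ d / av) (qv ^ d) k *
            poch (bv * qv ^ d) (qv ^ d) k * poch (qv ^ d / bv) (qv ^ d) k *
            poch (cv * qv ^ d) (qv ^ d) k * poch (qv ^ d) (qv ^ d) k) *
          (cv * qv ^ (2 * d - 3 * r)) ^ k) := by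
  simp only [summand_eq_wellPoised]
  refine modCong_qintR_of_forall_Phi hn fun e hen he => ?_
  have hen' : (e : ℤ) ∣ n := mod_cast hen
  have hdvd : (n : ℤ) ∣ r + d * m := by simpa [add_comm] using hmr.symm.dvd
  exact modCong_Phi_sum_seriesWeight he hd (hnd.of_isCoprime_of_dvd_right hen') (hen'.trans hdvd)

end Congruence

theorem stmt1 (n d : ℕ) (hn : 0 < n) (hd : 0 < d) (hnd : Nat.gcd n d = 1)
    (r : ℤ) (m : ℕ) (hm : m ≤ n - 1) (hmr : (d * m : ℤ) ≡ -r [ZMOD (n : ℤ)]) :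
    modCong (qintR n)
      (∑ k ∈ Finset.range (m + 1),
        qint (2 * d * k + r) *
          (poch (av * qv ^ r) (qv ^ (d : ℤ)) k * poch (qv ^ r / av) (qv ^ (d : ℤ)) k *
            poch (bv * qv ^ r) (qv ^ (d : ℤ)) k * poch (qv ^ r / bv) (qv ^ (d : ℤ)) k *
            poch (qv ^ r / cv) (qv ^ (d : ℤ)) k * poch (qv ^ r) (qv ^ (d : ℤ)) k) /
          (poch (av * qv ^ (d : ℤ)) (qv ^ (d : ℤ)) k * poch (qv ^ (d : ℤ) / av) (qv ^ (d : ℤ)) k *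
            poch (bv * qv ^ (d : ℤ)) (qv ^ (d : ℤ)) k * poch (qv ^ (d : ℤ) / bv) (qv ^ (d : ℤ)) k *
            poch (cv * qv ^ (d : ℤ)) (qv ^ (d : ℤ)) k * poch (qv ^ (d : ℤ)) (qv ^ (d : ℤ)) k) *
          (cv * qv ^ (2 * d - 3 * r)) ^ k) := by
  exact stmt1_general n d hn (mod_cast hd.ne') (Nat.Coprime.isCoprime hnd).symm r m hmr

end
end

section
/- Let a, b be indeterminates, let r = 1 or r = −1, and let n > 1 and d ≥ 3 be integers with gcd(n,d) = 1 and n ≡ −r (mod d). Then for M = (dn−n−r)/d (which is an integer) and also for M = n−1, the sum over k from 0 to M of [2dk+r] · (aq^r, q^r/a, bq^r, q^r/b, q^r, q^r; q^d)_k / (aq^d, q^d/a, bq^d, q^d/b, q^d, q^d; q^d)_k · q^{(2d−3r)k} is congruent to 0 modulo [n]·Φ_n(q). -/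
open Finset

noncomputable section

/-!
Put `Q = q ^ d` and `A = q ^ r`. Up to the factor `(1 - q)⁻¹` the summands are the terms of a
very-well-poised series in base `Q` with leading parameter `A`, and divisibility by `[n] Φ_n` is
checked in the `Φ_m`-adic valuation for each divisor `m > 1` of `n`.

Modulo `Φ_m`, `Q` is a primitive `m`-th root of unity and `A Q ^ N ≡ 1` for some `N < m`. Hence the
terms are antisymmetric under `k ↦ N - k`, the terms with `N < k < m` vanish to second order, and
consecutive blocks of `m` terms agree up to a factor. This gives one factor `Φ_m` for each `m`.

The second factor `Φ_n` comes from a deformation. Replace the parameters `A / a`, `A / b` by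
`C A / a`, `C A / b` with `C = q ^ n ≡ 1`, and one parameter `A` by `Q ^ (-N) ≡ A`. The deformed
series terminates, and its terms are a polynomial of degree `< N` evaluated at the nodes
`Q ^ (-k) + A Q ^ k` times the Lagrange weights of these nodes, so its sum is exactly zero. The
ratio of the deformed to the original `k`-th term is `≡ 1` modulo `Φ_n` and is invariant under
`k ↦ N - k` modulo `Φ_n ^ 2`. Together with the antisymmetry, this forces the original sum to
vanish modulo `Φ_n ^ 2`.
-/

section WellPoised

variable {F : Type*} [Field F]

/-- The factor `(1 - x X) (1 - C X / x) / X`. For `C = 1` the normalisation by `X` makes it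
invariant under `X ↦ X⁻¹`; the parameter `C` deforms the second linear factor. -/
def pairFactor (C x X : F) : F := (1 - x * X) * (1 - C * x⁻¹ * X) / X

/-- The well-poised product `∏_{i < k} χ (A Q^i) / χ (Q^{-(i+1)})` attached to a function `χ`. -/
def weight (Q A : F) (χ : F → F) (k : ℕ) : F :=
  ∏ i ∈ range k, χ (A * Q ^ i) / χ (Q ^ (i + 1))⁻¹

/-- The `k`-th term of a very-well-poised series in base `Q` with leading parameter `A`, whose
remaining parameters are recorded by `χ`. -/
def wellPoisedTerm (Q A : F) (χ : F → F) (k : ℕ) : F :=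
  ((Q ^ k)⁻¹ - A * Q ^ k) * weight Q A χ k

/-- The interpolation nodes `u⁻¹ + A u`, with `u` a power of `Q`, at which the terms of a
terminating very-well-poised series are Lagrange weights. -/
def node (A u : F) : F := u⁻¹ + A * u

theorem weight_succ (Q A : F) (χ : F → F) (k : ℕ) :
    weight Q A χ (k + 1) = weight Q A χ k * (χ (A * Q ^ k) / χ (Q ^ (k + 1))⁻¹) :=
  prod_range_succ _ _

theorem weight_add (Q A : F) (χ : F → F) (u k : ℕ) :
    weight Q A χ (u + k) =
      weight Q A χ u * ∏ i ∈ range k, χ (A * Q ^ (u + i)) / χ (Q ^ (u + i + 1))⁻¹ :=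
  prod_range_add _ u k

theorem weight_mul (Q A : F) (χ ψ : F → F) (k : ℕ) :
    weight Q A (fun X => χ X * ψ X) k = weight Q A χ k * weight Q A ψ k := by
  simp only [weight, ← prod_mul_distrib, mul_div_mul_comm]

theorem eq_weight_mul_of_step {Q A : F} {χ : F → F} {f : ℕ → F} {N : ℕ}
    (hχ : ∀ k < N, χ (Q ^ (k + 1))⁻¹ ≠ 0)
    (hf : ∀ k < N, f (k + 1) * χ (Q ^ (k + 1))⁻¹ = f k * χ (A * Q ^ k)) {k : ℕ} (hk : k ≤ N) :
    f k = f 0 * weight Q A χ k := by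
  induction k with
  | zero => simp [weight]
  | succ k ih =>
    rw [weight_succ, ← mul_assoc, ← ih (by omega), mul_div_assoc', ← hf k hk,
      mul_div_cancel_right₀ _ (hχ k hk)]

theorem weight_mul_eq_of_step {Q A : F} {χ : F → F} {f : ℕ → F} {N : ℕ}
    (hχ : ∀ k < N, χ (Q ^ (k + 1))⁻¹ ≠ 0)
    (hf : ∀ k < N, f (k + 1) * χ (A * Q ^ k) = f k * χ (Q ^ (k + 1))⁻¹) {k : ℕ} (hk : k ≤ N) :
    weight Q A χ k * f k = f 0 := by
  induction k with
  | zero => simp [weight]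
  | succ k ih =>
    rw [weight_succ, mul_assoc, div_mul_eq_mul_div, mul_comm (χ _), hf k hk,
      mul_div_cancel_right₀ _ (hχ k hk), ih (by omega)]

theorem node_sub_node {A u w : F} (hu : u ≠ 0) (hw : w ≠ 0) :
    node A u - node A w = (u⁻¹ - w⁻¹) * (1 - A * (u * w)) := by
  simp only [node]
  field_simp
  ring

theorem prod_erase_range_succ_succ {M : Type*} [CommMonoid M] (f : ℕ → M) (N k : ℕ) :
    ∏ j ∈ (range (N + 1)).erase (k + 1), f j = f 0 * ∏ j ∈ (range N).erase k, f (j + 1) := by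
  have hsplit : (range (N + 1)).erase (k + 1) =
      insert 0 (((range N).erase k).map ⟨Nat.succ, Nat.succ_injective⟩) := by
    rw [range_add_one', erase_insert_of_ne (Nat.succ_ne_zero k).symm, map_erase]
    rfl
  rw [hsplit, prod_insert (by simp), prod_map]
  rfl

theorem prod_erase_pow_succ_sub_pow (p : F) {N k : ℕ} (hk : k < N) :
    (∏ j ∈ (range (N + 1)).erase (k + 1), (p ^ (k + 1) - p ^ j)) * (p ^ k - p ^ N) =
      (p ^ (k + 1) - 1) * p ^ (N - 1) * ∏ j ∈ (range (N + 1)).erase k, (p ^ k - p ^ j) := by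
  have hshift : ∀ j, p ^ (k + 1) - p ^ (j + 1) = p * (p ^ k - p ^ j) := fun j => by ring
  rw [prod_erase_range_succ_succ, range_add_one, erase_insert_of_ne hk.ne', prod_insert (by simp)]
  simp only [hshift, prod_mul_distrib, prod_const, card_erase_of_mem (mem_range.2 hk), card_range]
  ring

theorem prod_one_sub_mul_pow_succ (x Q : F) (k N : ℕ) :
    (∏ j ∈ range N, (1 - x * Q ^ (k + 1 + j))) * (1 - x * Q ^ k) =
      (∏ j ∈ range N, (1 - x * Q ^ (k + j))) * (1 - x * Q ^ (k + N)) := by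
  rw [← prod_range_succ fun j => 1 - x * Q ^ (k + j), prod_range_succ']
  simp only [add_zero, add_assoc, add_comm 1]

theorem prod_erase_node_sub_node {Q : F} (A : F) (hQ : Q ≠ 0) {N k : ℕ} (hk : k ≤ N) :
    (∏ j ∈ (range (N + 1)).erase k, (node A (Q ^ k) - node A (Q ^ j))) *
        ((Q ^ k)⁻¹ - A * Q ^ k) =
      Q⁻¹ ^ k * (∏ j ∈ (range (N + 1)).erase k, (Q⁻¹ ^ k - Q⁻¹ ^ j)) *
        ∏ j ∈ range (N + 1), (1 - A * Q ^ (k + j)) := by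
  have hpow : ∀ j, Q ^ j ≠ 0 := fun j => pow_ne_zero j hQ
  have hmem : k ∈ range (N + 1) := mem_range.2 (by omega)
  have hlead : (Q ^ k)⁻¹ - A * Q ^ k = Q⁻¹ ^ k * (1 - A * Q ^ (k + k)) := by
    rw [inv_pow]
    field_simp [hpow k]
    ring
  simp only [node_sub_node (hpow _) (hpow _), ← inv_pow, ← pow_add, prod_mul_distrib]
  rw [inv_pow, hlead, ← mul_prod_erase _ _ hmem]
  ring

theorem pairFactor_terminating_mul_pow {Q A : F} (hQ : Q ≠ 0) (hA : A ≠ 0) (N k : ℕ) :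
    pairFactor (A * Q ^ N)⁻¹ 1 (A * Q ^ k) * A = (1 - A * Q ^ k) * (Q⁻¹ ^ k - Q⁻¹ ^ N) := by
  simp only [pairFactor, inv_pow]
  field_simp

theorem pairFactor_terminating_inv_pow {Q A : F} (hQ : Q ≠ 0) (hA : A ≠ 0) {N k : ℕ} (hk : k < N) :
    pairFactor (A * Q ^ N)⁻¹ 1 (Q ^ (k + 1))⁻¹ * A =
      (Q⁻¹ ^ (k + 1) - 1) * Q⁻¹ ^ (N - 1) * Q⁻¹ * (1 - A * Q ^ (k + (N + 1))) := by
  obtain ⟨N, rfl⟩ : ∃ N', N = N' + 1 := ⟨N - 1, by omega⟩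
  simp only [pairFactor, inv_pow, Nat.add_sub_cancel]
  field_simp
  ring

theorem wellPoisedTerm_terminating_mul_prod_node {Q A : F} (hQ : Q ≠ 0) (hA : A ≠ 0) {N k : ℕ}
    (hN : ∀ k < N, pairFactor (A * Q ^ N)⁻¹ 1 (Q ^ (k + 1))⁻¹ ≠ 0) (hk : k ≤ N) :
    wellPoisedTerm Q A (pairFactor (A * Q ^ N)⁻¹ 1) k *
        ∏ j ∈ (range (N + 1)).erase k, (node A (Q ^ k) - node A (Q ^ j)) =
      (∏ j ∈ (range (N + 1)).erase 0, (1 - Q⁻¹ ^ j)) * ∏ j ∈ range (N + 1), (1 - A * Q ^ j) := by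
  have hstep := weight_mul_eq_of_step (A := A) (f := fun k => Q⁻¹ ^ k *
    (∏ j ∈ (range (N + 1)).erase k, (Q⁻¹ ^ k - Q⁻¹ ^ j)) *
      ∏ j ∈ range (N + 1), (1 - A * Q ^ (k + j))) hN ?_ hk
  · simp only [pow_zero, one_mul, zero_add] at hstep
    rw [← hstep, ← prod_erase_node_sub_node A hQ hk, wellPoisedTerm]
    ring
  · intro k hk
    apply mul_right_cancel₀ hA
    have hE := prod_erase_pow_succ_sub_pow Q⁻¹ hk
    have hP := prod_one_sub_mul_pow_succ A Q k (N + 1)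
    simp only [mul_assoc _ (pairFactor _ _ _) A, pairFactor_terminating_mul_pow hQ hA,
      pairFactor_terminating_inv_pow hQ hA hk]
    linear_combination (Q⁻¹ ^ (k + 1) * (Q⁻¹ ^ k - Q⁻¹ ^ N) *
      ∏ j ∈ (range (N + 1)).erase (k + 1), (Q⁻¹ ^ (k + 1) - Q⁻¹ ^ j)) * hP +
      (Q⁻¹ ^ (k + 1) * (1 - A * Q ^ (k + (N + 1))) *
      ∏ j ∈ range (N + 1), (1 - A * Q ^ (k + j))) * hE

/-- Lagrange: the top coefficient of an interpolated polynomial of degree `< N` vanishes. -/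
theorem sum_wellPoisedTerm_terminating_mul_eval {Q A : F} (hQ : Q ≠ 0) (hA : A ≠ 0) {N : ℕ}
    (hQinj : Function.Injective (Q ^ · : ℕ → F)) (hAQ : ∀ k : ℕ, A * Q ^ k ≠ 1)
    (P : Polynomial F) (hP : P.natDegree < N) :
    ∑ k ∈ range (N + 1), wellPoisedTerm Q A (pairFactor (A * Q ^ N)⁻¹ 1) k *
      P.eval (node A (Q ^ k)) = 0 := by
  have hnode : ∀ {k j : ℕ}, k ≠ j → node A (Q ^ k) - node A (Q ^ j) ≠ 0 := fun hkj => by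
    rw [node_sub_node (pow_ne_zero _ hQ) (pow_ne_zero _ hQ), ← pow_add]
    exact mul_ne_zero (sub_ne_zero.2 (inv_injective.ne (hQinj.ne hkj)))
      (sub_ne_zero.2 (hAQ _).symm)
  have hnodes : Set.InjOn (fun k : ℕ => node A (Q ^ k)) (range (N + 1)) := fun k _ j _ hkj =>
    by_contra fun hne => hnode hne (sub_eq_zero.2 hkj)
  have htop : ∑ k ∈ range (N + 1), P.eval (node A (Q ^ k)) /
      ∏ j ∈ (range (N + 1)).erase k, (node A (Q ^ k) - node A (Q ^ j)) = 0 := by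
    have hdeg : P.degree < #(range (N + 1)) := by
      rw [card_range]
      exact Polynomial.degree_le_natDegree.trans_lt (by exact_mod_cast (by omega))
    rw [← Lagrange.coeff_eq_sum hnodes hdeg, card_range, Nat.add_sub_cancel,
      Polynomial.coeff_eq_zero_of_natDegree_lt hP]
  have hden : ∀ k < N, pairFactor (A * Q ^ N)⁻¹ 1 (Q ^ (k + 1))⁻¹ ≠ 0 := fun k hk => by
    have hp : Q⁻¹ ^ (k + 1) ≠ 1 := by
      rw [inv_pow, ne_eq, inv_eq_one, ← pow_zero Q]
      exact hQinj.ne (Nat.succ_ne_zero k)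
    refine left_ne_zero_of_mul (b := A) ?_
    rw [pairFactor_terminating_inv_pow hQ hA hk]
    exact mul_ne_zero (mul_ne_zero (mul_ne_zero (sub_ne_zero.2 hp) (pow_ne_zero _ (inv_ne_zero hQ)))
      (inv_ne_zero hQ)) (sub_ne_zero.2 (hAQ _).symm)
  rw [← mul_zero ((∏ j ∈ (range (N + 1)).erase 0, (1 - Q⁻¹ ^ j)) *
    ∏ j ∈ range (N + 1), (1 - A * Q ^ j)), ← htop, mul_sum]
  refine sum_congr rfl fun k hk => ?_
  rw [← wellPoisedTerm_terminating_mul_prod_node hQ hA hden (mem_range_succ_iff.1 hk),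
    mul_assoc, mul_div_cancel₀]
  exact prod_ne_zero_iff.2 fun j hj => hnode (ne_of_mem_erase hj).symm

/-- The polynomial through whose values at the nodes the factors `pairFactor C x`, with
`A C = Q ^ (s + 1)`, telescope. -/
def nodePolynomial (Q A x : F) (s : ℕ) : Polynomial F :=
  ∏ j ∈ range s, (Polynomial.X - Polynomial.C (node A (x / Q ^ (j + 1))))

theorem natDegree_nodePolynomial (Q A x : F) (s : ℕ) : (nodePolynomial Q A x s).natDegree = s := by
  rw [nodePolynomial, Polynomial.natDegree_finsetProd_X_sub_C_eq_card, card_range]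

theorem eval_nodePolynomial {Q A x : F} (hQ : Q ≠ 0) (hx : x ≠ 0) (s k : ℕ) :
    (nodePolynomial Q A x s).eval (node A (Q ^ k)) =
      Q⁻¹ ^ (k * s) * (∏ j ∈ range s, (1 - x⁻¹ * Q ^ (k + 1 + j))) *
        ∏ j ∈ range s, (1 - A * x * Q ^ k * Q⁻¹ ^ (j + 1)) := by
  have hconst : Q⁻¹ ^ (k * s) = ∏ _j ∈ range s, (Q ^ k)⁻¹ := by
    rw [prod_const, card_range, pow_mul, inv_pow]
  rw [nodePolynomial, Polynomial.eval_prod, hconst, ← prod_mul_distrib, ← prod_mul_distrib]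
  refine prod_congr rfl fun j _ => ?_
  rw [Polynomial.eval_sub, Polynomial.eval_X, Polynomial.eval_C,
    node_sub_node (pow_ne_zero k hQ) (div_ne_zero hx (pow_ne_zero _ hQ)), inv_pow]
  field_simp
  ring

theorem pairFactor_inv_pow_of_mul_eq {Q A C x : F} (hQ : Q ≠ 0) (hA : A ≠ 0) (hx : x ≠ 0) {s : ℕ}
    (hC : A * C = Q ^ (s + 1)) (k : ℕ) :
    pairFactor C x (Q ^ (k + 1))⁻¹ =
      Q ^ s / (A * Q ^ k) * (1 - x⁻¹ * Q ^ (k + 1)) * (1 - A * x * Q ^ k * Q⁻¹ ^ s) := by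
  obtain rfl : C = Q ^ (s + 1) / A := by rw [← hC, mul_div_cancel_left₀ _ hA]
  simp only [pairFactor, inv_pow]
  field_simp
  ring

theorem pairFactor_mul_pow_of_mul_eq {Q A C : F} (x : F) {s : ℕ}
    (hC : A * C = Q ^ (s + 1)) (k : ℕ) :
    pairFactor C x (A * Q ^ k) =
      (1 - A * x * Q ^ k) * (1 - x⁻¹ * Q ^ (k + 1 + s)) / (A * Q ^ k) := by
  have hCk : C * x⁻¹ * (A * Q ^ k) = x⁻¹ * Q ^ (k + 1 + s) := by
    linear_combination x⁻¹ * Q ^ k * hC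
  rw [pairFactor, hCk]
  ring

theorem eval_nodePolynomial_succ {Q A C x : F} (hQ : Q ≠ 0) (hA : A ≠ 0) (hx : x ≠ 0) {s : ℕ}
    (hC : A * C = Q ^ (s + 1)) (k : ℕ) :
    (nodePolynomial Q A x s).eval (node A (Q ^ (k + 1))) * pairFactor C x (Q ^ (k + 1))⁻¹ =
      (nodePolynomial Q A x s).eval (node A (Q ^ k)) * pairFactor C x (A * Q ^ k) := by
  have hshift₁ := prod_one_sub_mul_pow_succ x⁻¹ Q (k + 1) s
  have hshift₂ := prod_one_sub_mul_pow_succ (A * x * Q ^ k) Q⁻¹ 0 s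
  have hindex : ∀ j, A * x * Q ^ (k + 1) * Q⁻¹ ^ (j + 1) = A * x * Q ^ k * Q⁻¹ ^ j := fun j => by
    rw [inv_pow, inv_pow]
    field_simp
    ring
  simp only [eval_nodePolynomial hQ hx, hindex]
  simp only [zero_add, pow_zero, mul_one, add_comm 1] at hshift₂
  have hpow : Q⁻¹ ^ ((k + 1) * s) * Q ^ s = Q⁻¹ ^ (k * s) := by
    rw [add_mul, one_mul, pow_add, mul_assoc, ← mul_pow, inv_mul_cancel₀ hQ, one_pow, mul_one]
  rw [pairFactor_inv_pow_of_mul_eq hQ hA hx hC, pairFactor_mul_pow_of_mul_eq x hC, ← hpow]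
  linear_combination (Q⁻¹ ^ ((k + 1) * s) * Q ^ s / (A * Q ^ k) *
      (∏ j ∈ range s, (1 - A * x * Q ^ k * Q⁻¹ ^ j)) * (1 - A * x * Q ^ k * Q⁻¹ ^ s)) * hshift₁ -
    (Q⁻¹ ^ ((k + 1) * s) * Q ^ s / (A * Q ^ k) *
      (∏ j ∈ range s, (1 - x⁻¹ * Q ^ (k + 1 + j))) * (1 - x⁻¹ * Q ^ (k + 1 + s))) * hshift₂

theorem eval_nodePolynomial_zero_ne_zero {Q A C x : F} (hQ : Q ≠ 0) (hA : A ≠ 0) (hx : x ≠ 0)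
    {s : ℕ} (hC : A * C = Q ^ (s + 1)) (hxC : ∀ k < s, pairFactor C x (Q ^ (k + 1))⁻¹ ≠ 0) :
    (nodePolynomial Q A x s).eval (node A (Q ^ 0)) ≠ 0 := by
  rw [eval_nodePolynomial hQ hx]
  refine mul_ne_zero (mul_ne_zero (pow_ne_zero _ (inv_ne_zero hQ)) ?_) ?_ <;>
    refine prod_ne_zero_iff.2 fun j hj h => ?_
  · refine hxC j (mem_range.1 hj) ?_
    rw [zero_add, add_comm] at h
    rw [pairFactor_inv_pow_of_mul_eq hQ hA hx hC, h, mul_zero, zero_mul]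
  · obtain ⟨i, rfl⟩ : ∃ i, s = i + (j + 1) := ⟨s - (j + 1), by have := mem_range.1 hj; omega⟩
    refine hxC i (by omega) ?_
    have hi : Q ^ i * Q⁻¹ ^ (i + (j + 1)) = Q ^ 0 * Q⁻¹ ^ (j + 1) := by
      rw [pow_add Q⁻¹, ← mul_assoc, ← mul_pow, mul_inv_cancel₀ hQ, one_pow, pow_zero]
    rw [pairFactor_inv_pow_of_mul_eq hQ hA hx hC, mul_assoc (A * x), hi, ← mul_assoc (A * x), h,
      mul_zero]

theorem sum_wellPoisedTerm_eq_zero {Q A C a b : F} (hQ : Q ≠ 0) (hA : A ≠ 0) (ha : a ≠ 0)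
    (hb : b ≠ 0) {N s : ℕ} (hQinj : Function.Injective (Q ^ · : ℕ → F))
    (hAQ : ∀ k : ℕ, A * Q ^ k ≠ 1) (hC : A * C = Q ^ (s + 1)) (hsN : 2 * s < N)
    (haC : ∀ k < N, pairFactor C a (Q ^ (k + 1))⁻¹ ≠ 0)
    (hbC : ∀ k < N, pairFactor C b (Q ^ (k + 1))⁻¹ ≠ 0) :
    ∑ k ∈ range (N + 1), wellPoisedTerm Q A
      (fun X => pairFactor C a X * pairFactor C b X * pairFactor (A * Q ^ N)⁻¹ 1 X) k = 0 := by
  set P : F → Polynomial F := fun x => nodePolynomial Q A x s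
  have hsum := sum_wellPoisedTerm_terminating_mul_eval hQ hA hQinj hAQ (P a * P b) (N := N) <| by
    refine Polynomial.natDegree_mul_le.trans_lt ?_
    rw [natDegree_nodePolynomial, natDegree_nodePolynomial]
    omega
  have hP0 : (P a).eval (node A (Q ^ 0)) * (P b).eval (node A (Q ^ 0)) ≠ 0 := mul_ne_zero
    (eval_nodePolynomial_zero_ne_zero hQ hA ha hC fun k hk => haC k (by omega))
    (eval_nodePolynomial_zero_ne_zero hQ hA hb hC fun k hk => hbC k (by omega))
  refine (mul_eq_zero_iff_left hP0).1 ?_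
  rw [← hsum, mul_sum]
  refine sum_congr rfl fun k hk => ?_
  have hk : k ≤ N := mem_range_succ_iff.1 hk
  have hPa := eq_weight_mul_of_step (f := fun k => (P a).eval (node A (Q ^ k))) haC
    (fun k _ => eval_nodePolynomial_succ hQ hA ha hC k) hk
  have hPb := eq_weight_mul_of_step (f := fun k => (P b).eval (node A (Q ^ k))) hbC
    (fun k _ => eval_nodePolynomial_succ hQ hA hb hC k) hk
  rw [Polynomial.eval_mul, hPa, hPb]
  simp only [wellPoisedTerm, weight_mul]
  ring

end WellPoised

section Congruence

variable {F Γ₀ : Type*} [Field F] [LinearOrderedCommGroupWithZero Γ₀] {v : Valuation F Γ₀}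
  {γ : Γ₀} {x y z w : F}

theorem map_finset_prod_le_one {ι : Type*} {s : Finset ι} {f : ι → F} (hf : ∀ i ∈ s, v (f i) ≤ 1) :
    v (∏ i ∈ s, f i) ≤ 1 := by
  rw [map_prod]
  exact prod_le_one' hf

/-- Congruence of two `v`-integral elements modulo the ideal `{z | v z ≤ γ}` of the valuation
ring of `v`. -/
structure ValModEq (v : Valuation F Γ₀) (γ : Γ₀) (x y : F) : Prop where
  left_le_one : v x ≤ 1
  right_le_one : v y ≤ 1
  sub_le : v (x - y) ≤ γ

namespace ValModEq

theorem refl (hx : v x ≤ 1) : ValModEq v γ x x := ⟨hx, hx, by simp⟩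

theorem symm (h : ValModEq v γ x y) : ValModEq v γ y x :=
  ⟨h.right_le_one, h.left_le_one, by rw [v.map_sub_swap]; exact h.sub_le⟩

theorem trans (hxy : ValModEq v γ x y) (hyz : ValModEq v γ y z) : ValModEq v γ x z :=
  ⟨hxy.left_le_one, hyz.right_le_one, by
    rw [← sub_add_sub_cancel x y z]
    exact v.map_add_le hxy.sub_le hyz.sub_le⟩

theorem sub (hxy : ValModEq v γ x y) (hzw : ValModEq v γ z w) : ValModEq v γ (x - z) (y - w) :=
  ⟨v.map_sub_le hxy.left_le_one hzw.left_le_one, v.map_sub_le hxy.right_le_one hzw.right_le_one, by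
    rw [sub_sub_sub_comm]
    exact v.map_sub_le hxy.sub_le hzw.sub_le⟩

theorem mul (hxy : ValModEq v γ x y) (hzw : ValModEq v γ z w) : ValModEq v γ (x * z) (y * w) where
  left_le_one := by rw [v.map_mul]; exact mul_le_one' hxy.left_le_one hzw.left_le_one
  right_le_one := by rw [v.map_mul]; exact mul_le_one' hxy.right_le_one hzw.right_le_one
  sub_le := by
    rw [show x * z - y * w = x * (z - w) + w * (x - y) by ring]
    refine v.map_add_le ?_ ?_ <;> rw [v.map_mul]
    · exact mul_le_of_le_one_of_le hxy.left_le_one hzw.sub_le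
    · exact mul_le_of_le_one_of_le hzw.right_le_one hxy.sub_le

theorem inv (h : ValModEq v γ x y) (hx : v x = 1) (hy : v y = 1) : ValModEq v γ x⁻¹ y⁻¹ where
  left_le_one := by rw [map_inv₀, hx, inv_one]
  right_le_one := by rw [map_inv₀, hy, inv_one]
  sub_le := by
    rw [inv_sub_inv (v.ne_zero_iff.1 (by simp [hx])) (v.ne_zero_iff.1 (by simp [hy])), map_div₀,
      map_mul, hx, hy, mul_one, div_one, v.map_sub_swap]
    exact h.sub_le

theorem div (hxy : ValModEq v γ x y) (hzw : ValModEq v γ z w) (hz : v z = 1) (hw : v w = 1) :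
    ValModEq v γ (x / z) (y / w) := by
  rw [div_eq_mul_inv, div_eq_mul_inv]
  exact hxy.mul (hzw.inv hz hw)

theorem prod {ι : Type*} {s : Finset ι} {f g : ι → F} (h : ∀ i ∈ s, ValModEq v γ (f i) (g i)) :
    ValModEq v γ (∏ i ∈ s, f i) (∏ i ∈ s, g i) := by
  classical
  induction s using Finset.induction_on with
  | empty => exact refl (by simp)
  | insert i s hi ih =>
    rw [prod_insert hi, prod_insert hi]
    exact (h i (mem_insert_self i s)).mul (ih fun j hj => h j (mem_insert_of_mem hj))

theorem pow (h : ValModEq v γ x y) (n : ℕ) : ValModEq v γ (x ^ n) (y ^ n) := by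
  simpa using prod (s := range n) fun _ _ => h

theorem map_eq_one (h : ValModEq v γ x y) (hγ : γ < 1) (hx : v x = 1) : v y = 1 := by
  rw [← hx]
  exact v.map_eq_of_sub_lt (h.symm.sub_le.trans_lt (hx ▸ hγ))

theorem prod_range_sub_mul_prod_range {f g : ℕ → F} {N k : ℕ} (hk : k ≤ N)
    (hg : ∀ i < N, v (g i) ≤ 1) (hfg : ∀ i < N, ValModEq v γ (f (N - 1 - i)) (g i)) :
    ValModEq v γ ((∏ i ∈ range (N - k), f i) * ∏ i ∈ range k, g i) (∏ i ∈ range N, g i) := by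
  have hsplit : ∏ i ∈ range N, g i = (∏ i ∈ range (N - k), g (k + i)) * ∏ i ∈ range k, g i := by
    rw [mul_comm, ← prod_range_add, Nat.add_sub_cancel' hk]
  rw [hsplit, ← prod_range_reflect]
  refine (prod fun i hi => ?_).mul
    (refl (map_finset_prod_le_one fun i hi => hg i ((mem_range.1 hi).trans_le hk)))
  have hi := mem_range.1 hi
  rw [show N - k - 1 - i = N - 1 - (k + i) by omega]
  exact hfg _ (by omega)

/-- Reflection: both sides become `∏_{i < N} g i` after multiplication by the unit
`∏_{i < k} g i * ∏_{i < N - k} g i`. -/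
theorem prod_range_div_reflect {f g : ℕ → F} {N k : ℕ} (hk : k ≤ N) (hg : ∀ i < N, v (g i) = 1)
    (hfg : ∀ i < N, ValModEq v γ (f (N - 1 - i)) (g i)) :
    ValModEq v γ (∏ i ∈ range (N - k), f i / g i) (∏ i ∈ range k, f i / g i) := by
  have hunit : ∀ l ≤ N, v (∏ i ∈ range l, g i) = 1 := fun l hl => by
    rw [map_prod]
    exact prod_eq_one fun i hi => hg i ((mem_range.1 hi).trans_le hl)
  have hg' : ∀ i < N, v (g i) ≤ 1 := fun i hi => (hg i hi).le
  have hl := prod_range_sub_mul_prod_range hk hg' hfg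
  have hr := prod_range_sub_mul_prod_range (N.sub_le k) hg' hfg
  rw [Nat.sub_sub_self hk] at hr
  have hne : ∀ l ≤ N, ∏ i ∈ range l, g i ≠ 0 := fun l hl => v.ne_zero_iff.1 (by simp [hunit l hl])
  have hden : v ((∏ i ∈ range k, g i) * ∏ i ∈ range (N - k), g i) = 1 := by
    rw [map_mul, hunit k hk, hunit _ (N.sub_le k), mul_one]
  have hdiv := (hl.trans hr.symm).div (refl hden.le) hden hden
  rw [prod_div_distrib, prod_div_distrib]
  convert hdiv using 1
  · rw [mul_comm (∏ i ∈ range k, g i), mul_div_mul_right _ _ (hne k hk)]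
  · rw [mul_div_mul_right _ _ (hne _ (N.sub_le k))]

end ValModEq

theorem map_sum_le_of_antisymm (h2 : v 2 = 1) {T : ℕ → F} {N : ℕ}
    (hT : ∀ k ≤ N, v (T k + T (N - k)) ≤ γ) : v (∑ k ∈ range (N + 1), T k) ≤ γ := by
  have htwo : 2 * ∑ k ∈ range (N + 1), T k = ∑ k ∈ range (N + 1), (T k + T (N - k)) := by
    rw [sum_add_distrib, sum_flip, two_mul]
  rw [← one_mul (v _), ← h2, ← map_mul, htwo]
  exact v.map_sum_le fun k hk => hT k (mem_range_succ_iff.1 hk)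

/-- An antisymmetric sum that vanishes after a symmetric deformation is small to second order:
pairing `k` with `N - k` exhibits `2 ∑ T k` as
`∑ ((T k + T (N - k)) (1 - σ k) + T (N - k) (σ k - σ (N - k)))`. -/
theorem map_sum_le_sq_of_deformation (h2 : v 2 = 1) {T σ : ℕ → F} {N : ℕ}
    (hsum : ∑ k ∈ range (N + 1), T k * σ k = 0) (hT : ∀ k ≤ N, v (T k) ≤ 1)
    (hanti : ∀ k ≤ N, v (T k + T (N - k)) ≤ γ) (hσ : ∀ k ≤ N, v (1 - σ k) ≤ γ)
    (hsymm : ∀ k ≤ N, v (σ k - σ (N - k)) ≤ γ ^ 2) :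
    v (∑ k ∈ range (N + 1), T k) ≤ γ ^ 2 := by
  have hdiff : ∑ k ∈ range (N + 1), T k = ∑ k ∈ range (N + 1), T k * (1 - σ k) := by
    simp only [mul_sub, mul_one, sum_sub_distrib, hsum, sub_zero]
  rw [hdiff]
  refine map_sum_le_of_antisymm h2 fun k hk => ?_
  rw [show T k * (1 - σ k) + T (N - k) * (1 - σ (N - k)) =
    (T k + T (N - k)) * (1 - σ k) + T (N - k) * (σ k - σ (N - k)) by ring]
  refine v.map_add_le ?_ ?_ <;> rw [v.map_mul]
  · rw [sq]
    exact mul_le_mul' (hanti k hk) (hσ k hk)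
  · exact mul_le_of_le_one_of_le (hT _ (N.sub_le k)) (hsymm k hk)

end Congruence

section RootsOfUnity

variable {F Γ₀ : Type*} [Field F] [LinearOrderedCommGroupWithZero Γ₀] {v : Valuation F Γ₀}
  {γ : Γ₀} {m : ℕ}

/-- `X` reduces to an `m`-th root of unity modulo `{z | v z ≤ γ}`. -/
structure IsRootOfUnityMod (v : Valuation F Γ₀) (γ : Γ₀) (m : ℕ) (X : F) : Prop where
  map_eq_one : v X = 1
  pow_modEq_one : ValModEq v γ (X ^ m) 1

/-- `Q` reduces to a primitive `m`-th root of unity modulo the proper ideal `{z | v z ≤ γ}`, and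
each `1 - Q ^ j` that lies in this ideal generates it. -/
structure IsPrimitiveRootMod (v : Valuation F Γ₀) (γ : Γ₀) (m : ℕ) (Q : F) : Prop where
  lt_one : γ < 1
  map_eq_one : v Q = 1
  map_one_sub_pow_of_not_dvd : ∀ j : ℕ, ¬ m ∣ j → v (1 - Q ^ j) = 1
  map_one_sub_pow_of_dvd : ∀ j : ℕ, j ≠ 0 → m ∣ j → v (1 - Q ^ j) = γ

theorem ValModEq.isRootOfUnityMod {X : F} (h : ValModEq v γ X 1) (hγ : γ < 1) :
    IsRootOfUnityMod v γ m X :=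
  ⟨h.symm.map_eq_one hγ v.map_one, by simpa using h.pow m⟩

theorem map_one_sub_inv {X : F} (hX : v X = 1) : v (1 - X⁻¹) = v (1 - X) := by
  have hX0 : X ≠ 0 := v.ne_zero_iff.1 (by simp [hX])
  rw [show 1 - X⁻¹ = -((1 - X) * X⁻¹) by field_simp; ring, v.map_neg, v.map_mul, map_inv₀, hX,
    inv_one, mul_one]

namespace IsRootOfUnityMod

variable {X Z : F}

theorem mul (hX : IsRootOfUnityMod v γ m X) (hZ : IsRootOfUnityMod v γ m Z) :
    IsRootOfUnityMod v γ m (X * Z) :=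
  ⟨by rw [v.map_mul, hX.map_eq_one, hZ.map_eq_one, mul_one], by
    simpa [mul_pow] using hX.pow_modEq_one.mul hZ.pow_modEq_one⟩

theorem inv (hX : IsRootOfUnityMod v γ m X) : IsRootOfUnityMod v γ m X⁻¹ :=
  ⟨by rw [map_inv₀, hX.map_eq_one, inv_one], by
    simpa using hX.pow_modEq_one.inv (by rw [map_pow, hX.map_eq_one, one_pow]) v.map_one⟩

theorem pow (hX : IsRootOfUnityMod v γ m X) (j : ℕ) : IsRootOfUnityMod v γ m (X ^ j) :=
  ⟨by rw [map_pow, hX.map_eq_one, one_pow], by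
    simpa [← pow_mul, mul_comm] using hX.pow_modEq_one.pow j⟩

end IsRootOfUnityMod

theorem map_one_sub_eq_one_of_pow {y : F} (hy : v y ≤ 1) (hym : v (1 - y ^ m) = 1) :
    v (1 - y) = 1 := by
  have hgeom : v (1 - y) * v (∑ i ∈ range m, y ^ i) = 1 := by
    rw [← v.map_mul, mul_neg_geom_sum, hym]
  refine (v.map_sub_le v.map_one.le hy).antisymm ?_
  rw [← hgeom]
  exact mul_le_of_le_one_right' (v.map_sum_le fun i _ => by rw [map_pow]; exact pow_le_one' hy i)

/-- `x` is a unit whose reduction is not an `m`-th root of unity, like the indeterminates `a`, `b`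
of the theorem. -/
structure IsGenericMod (v : Valuation F Γ₀) (m : ℕ) (x : F) : Prop where
  map_eq_one : v x = 1
  map_one_sub_pow : v (1 - x ^ m) = 1

namespace IsGenericMod

variable {x X : F}

theorem inv (hx : IsGenericMod v m x) : IsGenericMod v m x⁻¹ :=
  ⟨by rw [map_inv₀, hx.map_eq_one, inv_one], by
    rw [inv_pow, map_one_sub_inv (by rw [map_pow, hx.map_eq_one, one_pow]), hx.map_one_sub_pow]⟩

theorem map_one_sub_mul (hx : IsGenericMod v m x) (hγ : γ < 1) (hX : IsRootOfUnityMod v γ m X) :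
    v (1 - x * X) = 1 := by
  have hxX : v (x * X) ≤ 1 := by rw [v.map_mul, hx.map_eq_one, hX.map_eq_one, mul_one]
  refine map_one_sub_eq_one_of_pow (m := m) hxX ?_
  have hpow : ValModEq v γ (x ^ m * 1) ((x * X) ^ m) := by
    rw [mul_pow]
    exact (ValModEq.refl (by rw [map_pow, hx.map_eq_one, one_pow])).mul hX.pow_modEq_one.symm
  refine ((ValModEq.refl v.map_one.le).sub hpow).map_eq_one hγ ?_
  rw [mul_one, hx.map_one_sub_pow]

end IsGenericMod

/-- On roots of unity modulo `γ`, the function `χ` respects congruences modulo `γ` and agrees with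
`(1 - X) ^ 2` up to a unit. -/
structure HasDoubleZeroMod (v : Valuation F Γ₀) (γ : Γ₀) (m : ℕ) (χ : F → F) : Prop where
  map_eq : ∀ ⦃X⦄, IsRootOfUnityMod v γ m X → v (χ X) = v (1 - X) ^ 2
  congr : ∀ ⦃X Z⦄, IsRootOfUnityMod v γ m X → IsRootOfUnityMod v γ m Z → ValModEq v γ X Z →
    ValModEq v γ (χ X) (χ Z)

theorem ValModEq.pairFactor {δ : Γ₀} {C x X Z : F} (h : ValModEq v δ X Z) (hC : v C ≤ 1)
    (hx : v x = 1) (hX : v X = 1) (hZ : v Z = 1) :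
    ValModEq v δ (pairFactor C x X) (pairFactor C x Z) := by
  have hone : ValModEq v δ 1 1 := .refl v.map_one.le
  have hCx : v (C * x⁻¹) ≤ 1 := by rwa [v.map_mul, map_inv₀, hx, inv_one, mul_one]
  exact ((hone.sub ((ValModEq.refl hx.le).mul h)).mul
    (hone.sub ((ValModEq.refl hCx).mul h))).div h hX hZ

theorem hasDoubleZeroMod_pairFactor_mul {a b : F} (hγ : γ < 1) (ha : IsGenericMod v m a)
    (hb : IsGenericMod v m b) :
    HasDoubleZeroMod v γ m fun X => pairFactor 1 a X * pairFactor 1 b X * pairFactor 1 1 X where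
  map_eq X hX := by
    simp only [pairFactor, one_mul, inv_one, v.map_mul, map_div₀, hX.map_eq_one,
      ha.map_one_sub_mul hγ hX, ha.inv.map_one_sub_mul hγ hX,
      hb.map_one_sub_mul hγ hX, hb.inv.map_one_sub_mul hγ hX, mul_one, div_one, sq]
  congr X Z hX hZ h := by
    have hpair : ∀ x, v x = 1 → ValModEq v γ (pairFactor 1 x X) (pairFactor 1 x Z) := fun x hx =>
      h.pairFactor v.map_one.le hx hX.map_eq_one hZ.map_eq_one
    exact ((hpair a ha.map_eq_one).mul (hpair b hb.map_eq_one)).mul (hpair 1 v.map_one)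

namespace IsPrimitiveRootMod

variable {Q A : F} {N : ℕ}

theorem pow_modEq_one (hQ : IsPrimitiveRootMod v γ m Q) {j : ℕ} (hj : m ∣ j) :
    ValModEq v γ (Q ^ j) 1 := by
  refine ⟨by rw [map_pow, hQ.map_eq_one, one_pow], v.map_one.le, ?_⟩
  rw [v.map_sub_swap]
  obtain rfl | hj0 := eq_or_ne j 0
  · simp
  · exact (hQ.map_one_sub_pow_of_dvd j hj0 hj).le

theorem isRootOfUnityMod (hQ : IsPrimitiveRootMod v γ m Q) : IsRootOfUnityMod v γ m Q :=
  ⟨hQ.map_eq_one, hQ.pow_modEq_one dvd_rfl⟩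

theorem ne_zero (hQ : IsPrimitiveRootMod v γ m Q) : Q ≠ 0 :=
  v.ne_zero_iff.1 (by simp [hQ.map_eq_one])

theorem isRootOfUnityMod_of_mul_pow (hQ : IsPrimitiveRootMod v γ m Q)
    (hA : ValModEq v γ (A * Q ^ N) 1) : IsRootOfUnityMod v γ m A := by
  rw [← mul_inv_cancel_right₀ (pow_ne_zero N hQ.ne_zero) A]
  exact (hA.isRootOfUnityMod hQ.lt_one).mul (hQ.isRootOfUnityMod.pow N).inv

theorem mul_pow_mod_modEq_one (hQ : IsPrimitiveRootMod v γ m Q)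
    (hA : ValModEq v γ (A * Q ^ N) 1) : ValModEq v γ (A * Q ^ (N % m)) 1 := by
  refine .trans ?_ hA
  have hperiod : Q ^ N = Q ^ (N % m) * Q ^ (m * (N / m)) := by rw [← pow_add, Nat.mod_add_div]
  have hinteg : v (A * Q ^ (N % m)) = 1 :=
    ((hQ.isRootOfUnityMod_of_mul_pow hA).mul (hQ.isRootOfUnityMod.pow _)).map_eq_one
  rw [hperiod, ← mul_assoc]
  simpa using (ValModEq.refl hinteg.le).mul (hQ.pow_modEq_one (dvd_mul_right m (N / m))).symm

theorem pow_of_coprime (hQ : IsPrimitiveRootMod v γ m Q) {d : ℕ} (hd : d ≠ 0)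
    (hmd : m.Coprime d) : IsPrimitiveRootMod v γ m (Q ^ d) where
  lt_one := hQ.lt_one
  map_eq_one := by rw [map_pow, hQ.map_eq_one, one_pow]
  map_one_sub_pow_of_not_dvd j hj := by
    rw [← pow_mul]
    exact hQ.map_one_sub_pow_of_not_dvd _ fun h => hj (hmd.dvd_of_dvd_mul_left h)
  map_one_sub_pow_of_dvd j hj hmj := by
    rw [← pow_mul]
    exact hQ.map_one_sub_pow_of_dvd _ (mul_ne_zero hd hj) (hmj.mul_left d)

theorem mul_pow_modEq_inv_pow (hQ : IsPrimitiveRootMod v γ m Q) (hA : ValModEq v γ (A * Q ^ N) 1)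
    {j l : ℕ} (hjl : j + l = N) : ValModEq v γ (A * Q ^ j) (Q ^ l)⁻¹ := by
  have hAj : A * Q ^ j = A * Q ^ N * (Q ^ l)⁻¹ := by
    rw [← hjl, pow_add, ← mul_assoc, mul_inv_cancel_right₀ (pow_ne_zero l hQ.ne_zero)]
  have hl : v (Q ^ l)⁻¹ ≤ 1 := (hQ.isRootOfUnityMod.pow l).inv.map_eq_one.le
  rw [hAj]
  simpa using hA.mul (.refl hl)

end IsPrimitiveRootMod

section Terms

variable {Q A : F} {N : ℕ} {χ : F → F}

theorem HasDoubleZeroMod.map_inv_pow (hχ : HasDoubleZeroMod v γ m χ)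
    (hQ : IsPrimitiveRootMod v γ m Q) (j : ℕ) : v (χ (Q ^ j)⁻¹) = v (1 - Q ^ j) ^ 2 := by
  have hj := hQ.isRootOfUnityMod.pow j
  rw [hχ.map_eq hj.inv, map_one_sub_inv hj.map_eq_one]

theorem HasDoubleZeroMod.map_inv_pow_succ (hχ : HasDoubleZeroMod v γ m χ)
    (hQ : IsPrimitiveRootMod v γ m Q) {u i : ℕ} (hu : m ∣ u) (hi : i + 1 < m) :
    v (χ (Q ^ (u + i + 1))⁻¹) = 1 := by
  rw [hχ.map_inv_pow hQ, hQ.map_one_sub_pow_of_not_dvd, one_pow]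
  rw [add_assoc, Nat.dvd_add_right hu]
  exact Nat.not_dvd_of_pos_of_lt i.succ_pos hi

theorem HasDoubleZeroMod.map_mul_pow_le_one (hχ : HasDoubleZeroMod v γ m χ)
    (hQ : IsPrimitiveRootMod v γ m Q) (hA : IsRootOfUnityMod v γ m A) (j : ℕ) :
    v (χ (A * Q ^ j)) ≤ 1 := by
  have hj := hA.mul (hQ.isRootOfUnityMod.pow j)
  rw [hχ.map_eq hj]
  exact pow_le_one' (v.map_sub_le v.map_one.le hj.map_eq_one.le) 2

theorem weight_sub_modEq (hQ : IsPrimitiveRootMod v γ m Q) (hA : ValModEq v γ (A * Q ^ N) 1)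
    (hN : N < m) (hχ : HasDoubleZeroMod v γ m χ) {k : ℕ} (hk : k ≤ N) :
    ValModEq v γ (weight Q A χ (N - k)) (weight Q A χ k) := by
  have hAroot := hQ.isRootOfUnityMod_of_mul_pow hA
  refine .prod_range_div_reflect hk (fun i hi => ?_) fun i hi => ?_
  · simpa using hχ.map_inv_pow_succ hQ (dvd_zero m) (show i + 1 < m by omega)
  · exact hχ.congr (hAroot.mul (hQ.isRootOfUnityMod.pow _)) (hQ.isRootOfUnityMod.pow _).inv
      (hQ.mul_pow_modEq_inv_pow hA (by omega))

theorem wellPoisedTerm_sub_modEq_neg (hQ : IsPrimitiveRootMod v γ m Q)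
    (hA : ValModEq v γ (A * Q ^ N) 1) (hN : N < m) (hχ : HasDoubleZeroMod v γ m χ) {k : ℕ}
    (hk : k ≤ N) :
    ValModEq v γ (wellPoisedTerm Q A χ (N - k)) (-wellPoisedTerm Q A χ k) := by
  rw [wellPoisedTerm, wellPoisedTerm, ← neg_mul, neg_sub]
  exact ((hQ.mul_pow_modEq_inv_pow hA (Nat.add_sub_cancel' hk)).symm.sub
    (hQ.mul_pow_modEq_inv_pow hA (Nat.sub_add_cancel hk))).mul (weight_sub_modEq hQ hA hN hχ hk)

theorem map_wellPoisedTerm_add_le (hQ : IsPrimitiveRootMod v γ m Q)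
    (hA : ValModEq v γ (A * Q ^ N) 1) (hN : N < m) (hχ : HasDoubleZeroMod v γ m χ) {k : ℕ}
    (hk : k ≤ N) : v (wellPoisedTerm Q A χ k + wellPoisedTerm Q A χ (N - k)) ≤ γ := by
  simpa [add_comm] using (wellPoisedTerm_sub_modEq_neg hQ hA hN hχ hk).sub_le

theorem map_sum_wellPoisedTerm_le (h2 : v 2 = 1) (hQ : IsPrimitiveRootMod v γ m Q)
    (hA : ValModEq v γ (A * Q ^ N) 1) (hN : N < m) (hχ : HasDoubleZeroMod v γ m χ) :
    v (∑ k ∈ range (N + 1), wellPoisedTerm Q A χ k) ≤ γ :=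
  map_sum_le_of_antisymm h2 fun _ hk => map_wellPoisedTerm_add_le hQ hA hN hχ hk

theorem map_prod_mul_pow_le_sq (hQ : IsPrimitiveRootMod v γ m Q)
    (hA : ValModEq v γ (A * Q ^ N) 1) (hχ : HasDoubleZeroMod v γ m χ) {u k : ℕ} (hu : m ∣ u)
    (hk : N < k) : v (∏ i ∈ range k, χ (A * Q ^ (u + i))) ≤ γ ^ 2 := by
  have hAroot := hQ.isRootOfUnityMod_of_mul_pow hA
  have huN : ValModEq v γ 1 (A * Q ^ (u + N)) := by
    simpa [pow_add, mul_left_comm] using ((hQ.pow_modEq_one hu).mul hA).symm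
  rw [← mul_prod_erase _ _ (mem_range.2 hk), v.map_mul,
    hχ.map_eq (hAroot.mul (hQ.isRootOfUnityMod.pow _))]
  exact mul_le_of_le_of_le_one (pow_le_pow_left' huN.sub_le 2)
    (map_finset_prod_le_one fun i _ => hχ.map_mul_pow_le_one hQ hAroot _)

theorem map_prod_inv_pow_eq_one (hQ : IsPrimitiveRootMod v γ m Q) (hχ : HasDoubleZeroMod v γ m χ)
    {u k : ℕ} (hu : m ∣ u) (hk : k < m) : v (∏ i ∈ range k, χ (Q ^ (u + i + 1))⁻¹) = 1 := by
  rw [map_prod]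
  exact prod_eq_one fun i hi => hχ.map_inv_pow_succ hQ hu (by have := mem_range.1 hi; omega)

theorem map_prod_inv_pow_eq_sq (hQ : IsPrimitiveRootMod v γ m Q) (hχ : HasDoubleZeroMod v γ m χ)
    {u : ℕ} (hu : m ∣ u) (hm : 0 < m) : v (∏ i ∈ range m, χ (Q ^ (u + i + 1))⁻¹) = γ ^ 2 := by
  obtain ⟨l, rfl⟩ := Nat.exists_eq_add_one_of_ne_zero hm.ne'
  rw [prod_range_succ, v.map_mul, map_prod_inv_pow_eq_one hQ hχ hu l.lt_succ_self, one_mul,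
    hχ.map_inv_pow hQ, add_assoc,
    hQ.map_one_sub_pow_of_dvd _ (by omega) (dvd_add hu dvd_rfl)]

theorem map_lead_le_one (hQ : IsPrimitiveRootMod v γ m Q) (hA : IsRootOfUnityMod v γ m A) (k : ℕ) :
    v ((Q ^ k)⁻¹ - A * Q ^ k) ≤ 1 :=
  v.map_sub_le (hQ.isRootOfUnityMod.pow k).inv.map_eq_one.le
    (hA.mul (hQ.isRootOfUnityMod.pow k)).map_eq_one.le

theorem map_wellPoisedTerm_le_sq (hQ : IsPrimitiveRootMod v γ m Q)
    (hA : ValModEq v γ (A * Q ^ N) 1) (hχ : HasDoubleZeroMod v γ m χ) {k : ℕ}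
    (hNk : N < k) (hkm : k < m) : v (wellPoisedTerm Q A χ k) ≤ γ ^ 2 := by
  have hnum := map_prod_mul_pow_le_sq hQ hA hχ (dvd_zero m) hNk
  have hden := map_prod_inv_pow_eq_one hQ hχ (dvd_zero m) hkm
  simp only [zero_add] at hnum hden
  rw [wellPoisedTerm, weight, prod_div_distrib, v.map_mul, map_div₀, hden, div_one]
  exact mul_le_of_le_one_of_le (map_lead_le_one hQ (hQ.isRootOfUnityMod_of_mul_pow hA) k) hnum

theorem map_sum_wellPoisedTerm_le_of_le {δ : Γ₀} (hQ : IsPrimitiveRootMod v γ m Q)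
    (hA : ValModEq v γ (A * Q ^ N) 1) (hN : N < m) (hχ : HasDoubleZeroMod v γ m χ)
    (hδ : γ ^ 2 ≤ δ) (hsum : v (∑ k ∈ range (N + 1), wellPoisedTerm Q A χ k) ≤ δ) :
    v (∑ k ∈ range m, wellPoisedTerm Q A χ k) ≤ δ := by
  rw [← sum_range_add_sum_Ico _ (show N + 1 ≤ m from hN)]
  refine v.map_add_le hsum (v.map_sum_le fun k hk => ?_)
  obtain ⟨hNk, hkm⟩ := mem_Ico.1 hk
  exact (map_wellPoisedTerm_le_sq hQ hA hχ hNk hkm).trans hδ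

theorem map_weight_mul_le_one (hQ : IsPrimitiveRootMod v γ m Q)
    (hA : ValModEq v γ (A * Q ^ N) 1) (hN : N < m) (hχ : HasDoubleZeroMod v γ m χ) (c : ℕ) :
    v (weight Q A χ (c * m)) ≤ 1 := by
  induction c with
  | zero => simp [weight]
  | succ c ih =>
    rw [Nat.succ_mul, weight_add, v.map_mul, prod_div_distrib, map_div₀,
      map_prod_inv_pow_eq_sq hQ hχ (dvd_mul_left m c) (by omega)]
    exact mul_le_one' ih (div_le_one_of_le₀
      (map_prod_mul_pow_le_sq hQ hA hχ (dvd_mul_left m c) hN) zero_le)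

theorem wellPoisedTerm_add_modEq (hQ : IsPrimitiveRootMod v γ m Q)
    (hA : ValModEq v γ (A * Q ^ N) 1) (hχ : HasDoubleZeroMod v γ m χ) {u k : ℕ}
    (hu : m ∣ u) (hk : k < m) (hweight : v (weight Q A χ u) ≤ 1) :
    ValModEq v γ (wellPoisedTerm Q A χ (u + k)) (weight Q A χ u * wellPoisedTerm Q A χ k) := by
  have hAroot := hQ.isRootOfUnityMod_of_mul_pow hA
  have hroot : ∀ j, IsRootOfUnityMod v γ m (Q ^ j) := hQ.isRootOfUnityMod.pow
  have hshift : ∀ j, ValModEq v γ (Q ^ (u + j)) (Q ^ j) := fun j => by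
    simpa [pow_add] using (hQ.pow_modEq_one hu).mul (.refl (hroot j).map_eq_one.le)
  have hinv : ∀ j, ValModEq v γ (Q ^ (u + j))⁻¹ (Q ^ j)⁻¹ := fun j =>
    (hshift j).inv (hroot _).map_eq_one (hroot _).map_eq_one
  have hmul : ∀ j, ValModEq v γ (A * Q ^ (u + j)) (A * Q ^ j) := fun j =>
    (ValModEq.refl hAroot.map_eq_one.le).mul (hshift j)
  rw [wellPoisedTerm, wellPoisedTerm, weight_add, mul_left_comm (weight Q A χ u)]
  refine ((hinv k).sub (hmul k)).mul ((ValModEq.refl hweight).mul (.prod fun i hi => ?_))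
  have hi : i + 1 < m := by have := mem_range.1 hi; omega
  refine (hχ.congr (hAroot.mul (hroot _)) (hAroot.mul (hroot _)) (hmul i)).div
    (hχ.congr (hroot _).inv (hroot _).inv (hinv (i + 1))) (hχ.map_inv_pow_succ hQ hu hi) ?_
  simpa using hχ.map_inv_pow_succ hQ (dvd_zero m) hi

theorem map_sum_wellPoisedTerm_block_le (hQ : IsPrimitiveRootMod v γ m Q)
    (hA : ValModEq v γ (A * Q ^ N) 1) (hN : N < m) (hχ : HasDoubleZeroMod v γ m χ) (c : ℕ) {l : ℕ}
    (hl : l ≤ m) (hsum : v (∑ k ∈ range l, wellPoisedTerm Q A χ k) ≤ γ) :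
    v (∑ k ∈ range l, wellPoisedTerm Q A χ (c * m + k)) ≤ γ := by
  have hweight := map_weight_mul_le_one hQ hA hN hχ c
  rw [← sub_add_cancel (∑ k ∈ range l, wellPoisedTerm Q A χ (c * m + k))
    (weight Q A χ (c * m) * ∑ k ∈ range l, wellPoisedTerm Q A χ k), mul_sum, ← sum_sub_distrib,
    ← mul_sum]
  refine v.map_add_le (v.map_sum_le fun k hk => ?_) ?_
  · exact (wellPoisedTerm_add_modEq hQ hA hχ (dvd_mul_left m c)
      ((mem_range.1 hk).trans_le hl) hweight).sub_le
  · rw [v.map_mul]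
    exact mul_le_of_le_one_of_le hweight hsum

theorem map_sum_wellPoisedTerm_mul_le (h2 : v 2 = 1) (hQ : IsPrimitiveRootMod v γ m Q)
    (hA : ValModEq v γ (A * Q ^ N) 1) (hN : N < m) (hχ : HasDoubleZeroMod v γ m χ) (c : ℕ) :
    v (∑ k ∈ range (c * m), wellPoisedTerm Q A χ k) ≤ γ := by
  have hblock : v (∑ k ∈ range m, wellPoisedTerm Q A χ k) ≤ γ :=
    map_sum_wellPoisedTerm_le_of_le hQ hA hN hχ (pow_le_of_le_one zero_le hQ.lt_one.le two_ne_zero)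
      (map_sum_wellPoisedTerm_le h2 hQ hA hN hχ)
  induction c with
  | zero => simp
  | succ c ih =>
    rw [Nat.succ_mul, sum_range_add]
    exact v.map_add_le ih (map_sum_wellPoisedTerm_block_le hQ hA hN hχ c le_rfl hblock)

theorem map_sum_wellPoisedTerm_mul_add_le (h2 : v 2 = 1) (hQ : IsPrimitiveRootMod v γ m Q)
    (hA : ValModEq v γ (A * Q ^ N) 1) (hN : N < m) (hχ : HasDoubleZeroMod v γ m χ) (c : ℕ) :
    v (∑ k ∈ range (c * m + N + 1), wellPoisedTerm Q A χ k) ≤ γ := by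
  rw [add_assoc, sum_range_add]
  exact v.map_add_le (map_sum_wellPoisedTerm_mul_le h2 hQ hA hN hχ c)
    (map_sum_wellPoisedTerm_block_le hQ hA hN hχ c hN (map_sum_wellPoisedTerm_le h2 hQ hA hN hχ))

end Terms

end RootsOfUnity

section Deformation

variable {F Γ₀ : Type*} [Field F] [LinearOrderedCommGroupWithZero Γ₀] {v : Valuation F Γ₀}
  {γ : Γ₀} {m N : ℕ} {Q A C x X Z : F}

/-- The ratio of `pairFactor C x X` to its undeformed value `pairFactor 1 x X`. -/
def deformRatio (C x X : F) : F := (1 - C * x⁻¹ * X) / (1 - x⁻¹ * X)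

theorem pairFactor_eq_mul_deformRatio (C : F) (hX : 1 - x⁻¹ * X ≠ 0) :
    pairFactor C x X = pairFactor 1 x X * deformRatio C x X := by
  simp only [pairFactor, deformRatio, mul_assoc C, one_mul]
  generalize x⁻¹ * X = y at *
  field_simp

theorem deformRatio_eq_one_sub (C : F) (hX : 1 - x⁻¹ * X ≠ 0) :
    deformRatio C x X = 1 - (C - 1) * (x⁻¹ * X / (1 - x⁻¹ * X)) := by
  rw [deformRatio, mul_assoc C]
  generalize x⁻¹ * X = y at *
  field_simp
  ring

theorem deformRatio_modEq_one (hC : ValModEq v γ C 1) (hxX : v (x⁻¹ * X) ≤ 1)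
    (hX : v (1 - x⁻¹ * X) = 1) : ValModEq v γ (deformRatio C x X) 1 := by
  have hquot : v (x⁻¹ * X / (1 - x⁻¹ * X)) ≤ 1 := by rwa [map_div₀, hX, div_one]
  rw [deformRatio_eq_one_sub C (v.ne_zero_iff.1 (by simp [hX]))]
  simpa using (ValModEq.refl v.map_one.le).sub
    ((hC.sub (.refl v.map_one.le)).mul (.refl hquot))

theorem ValModEq.deformRatio (hC : ValModEq v γ C 1) (hx : v x = 1) (h : ValModEq v γ X Z)
    (hX : v (1 - x⁻¹ * X) = 1) (hZ : v (1 - x⁻¹ * Z) = 1) :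
    ValModEq v (γ ^ 2) (deformRatio C x X) (deformRatio C x Z) := by
  have hx' : v x⁻¹ ≤ 1 := by rw [map_inv₀, hx, inv_one]
  have hxXZ : ValModEq v γ (x⁻¹ * X) (x⁻¹ * Z) := (ValModEq.refl hx').mul h
  have hquot := hxXZ.div ((ValModEq.refl v.map_one.le).sub hxXZ) hX hZ
  refine ⟨(deformRatio_modEq_one hC hxXZ.left_le_one hX).left_le_one,
    (deformRatio_modEq_one hC hxXZ.right_le_one hZ).left_le_one, ?_⟩
  rw [deformRatio_eq_one_sub C (v.ne_zero_iff.1 (by simp [hX])),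
    deformRatio_eq_one_sub C (v.ne_zero_iff.1 (by simp [hZ])), sub_sub_sub_cancel_left, ← mul_sub,
    v.map_mul, sq]
  exact mul_le_mul' hC.sub_le hquot.symm.sub_le

/-- None of the arguments `A Q ^ i` and `Q ^ (-(i + 1))`, `i < N`, of a well-poised product of
length `N` reduces to the unit `x`. -/
structure AvoidsArguments (v : Valuation F Γ₀) (Q A : F) (N : ℕ) (x : F) : Prop where
  map_eq_one : v x = 1
  map_one_sub_mul_pow : ∀ i < N, v (1 - x⁻¹ * (A * Q ^ i)) = 1
  map_one_sub_inv_pow : ∀ i < N, v (1 - x⁻¹ * (Q ^ (i + 1))⁻¹) = 1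

theorem IsGenericMod.avoidsArguments (hx : IsGenericMod v m x) (hQ : IsPrimitiveRootMod v γ m Q)
    (hA : ValModEq v γ (A * Q ^ N) 1) : AvoidsArguments v Q A N x where
  map_eq_one := hx.map_eq_one
  map_one_sub_mul_pow i _ := hx.inv.map_one_sub_mul hQ.lt_one
    ((hQ.isRootOfUnityMod_of_mul_pow hA).mul (hQ.isRootOfUnityMod.pow i))
  map_one_sub_inv_pow i _ :=
    hx.inv.map_one_sub_mul hQ.lt_one (hQ.isRootOfUnityMod.pow (i + 1)).inv

theorem IsPrimitiveRootMod.avoidsArguments_one (hQ : IsPrimitiveRootMod v γ m Q)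
    (hA : ValModEq v γ (A * Q ^ N) 1) (hN : N < m) : AvoidsArguments v Q A N 1 := by
  have hinv : ∀ j < N, v (1 - (Q ^ (j + 1))⁻¹) = 1 := fun j hj => by
    rw [map_one_sub_inv (hQ.isRootOfUnityMod.pow _).map_eq_one]
    exact hQ.map_one_sub_pow_of_not_dvd _ (Nat.not_dvd_of_pos_of_lt j.succ_pos (by omega))
  refine ⟨v.map_one, fun i hi => ?_, fun i hi => by simpa using hinv i hi⟩
  have hmod : ValModEq v γ (A * Q ^ i) (Q ^ (N - 1 - i + 1))⁻¹ :=
    hQ.mul_pow_modEq_inv_pow hA (by omega)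
  rw [inv_one, one_mul]
  exact ((ValModEq.refl v.map_one.le).sub hmod.symm).map_eq_one hQ.lt_one (hinv _ (by omega))

namespace AvoidsArguments

theorem weight_pairFactor_eq_mul (hx : AvoidsArguments v Q A N x) (C : F) {k : ℕ} (hk : k ≤ N) :
    weight Q A (pairFactor C x) k =
      weight Q A (pairFactor 1 x) k * weight Q A (deformRatio C x) k := by
  rw [← weight_mul]
  refine prod_congr rfl fun i hi => ?_
  have hi : i < N := (mem_range.1 hi).trans_le hk
  rw [pairFactor_eq_mul_deformRatio C (v.ne_zero_iff.1 (by simp [hx.map_one_sub_mul_pow i hi])),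
    pairFactor_eq_mul_deformRatio C (v.ne_zero_iff.1 (by simp [hx.map_one_sub_inv_pow i hi]))]

theorem deformRatio_inv_pow_modEq_one (hx : AvoidsArguments v Q A N x) (hQ : v Q = 1)
    (hC : ValModEq v γ C 1) {i : ℕ} (hi : i < N) :
    ValModEq v γ (deformRatio C x (Q ^ (i + 1))⁻¹) 1 :=
  deformRatio_modEq_one hC (by simp [hx.map_eq_one, hQ]) (hx.map_one_sub_inv_pow i hi)

theorem weight_deformRatio_modEq_one (hx : AvoidsArguments v Q A N x) (hQ : v Q = 1)
    (hA : v A = 1) (hγ : γ < 1) (hC : ValModEq v γ C 1) {k : ℕ} (hk : k ≤ N) :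
    ValModEq v γ (weight Q A (deformRatio C x) k) 1 := by
  rw [← prod_const_one (s := range k)]
  refine .prod fun i hi => ?_
  have hi : i < N := (mem_range.1 hi).trans_le hk
  have hnum := deformRatio_modEq_one hC (by simp [hx.map_eq_one, hQ, hA])
    (hx.map_one_sub_mul_pow i hi)
  have hden := hx.deformRatio_inv_pow_modEq_one hQ hC hi
  simpa using hnum.div hden (hden.symm.map_eq_one hγ v.map_one) v.map_one

theorem weight_deformRatio_sub_modEq (hx : AvoidsArguments v Q A N x)
    (hQ : IsPrimitiveRootMod v γ m Q) (hA : ValModEq v γ (A * Q ^ N) 1) (hC : ValModEq v γ C 1)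
    {k : ℕ} (hk : k ≤ N) :
    ValModEq v (γ ^ 2) (weight Q A (deformRatio C x) (N - k)) (weight Q A (deformRatio C x) k) :=
  .prod_range_div_reflect hk
    (fun _ hi => (hx.deformRatio_inv_pow_modEq_one hQ.map_eq_one hC hi).symm.map_eq_one
      hQ.lt_one v.map_one)
    fun i hi => .deformRatio hC hx.map_eq_one (hQ.mul_pow_modEq_inv_pow hA (by omega))
      (hx.map_one_sub_mul_pow _ (by omega)) (hx.map_one_sub_inv_pow i hi)

end AvoidsArguments

theorem IsGenericMod.map_pairFactor (hx : IsGenericMod v m x) (hγ : γ < 1) (hC : ValModEq v γ C 1)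
    (hX : IsRootOfUnityMod v γ m X) : v (pairFactor C x X) = 1 := by
  have hx' : v (x⁻¹ * X) ≤ 1 := by simp [hx.map_eq_one, hX.map_eq_one]
  have hmod : ValModEq v γ (1 - x⁻¹ * X) (1 - C * x⁻¹ * X) := by
    simpa [mul_assoc] using (ValModEq.refl v.map_one.le).sub (hC.symm.mul (.refl hx'))
  rw [pairFactor, map_div₀, v.map_mul, hx.map_one_sub_mul hγ hX,
    hmod.map_eq_one hγ (hx.inv.map_one_sub_mul hγ hX), hX.map_eq_one, mul_one, div_one]

theorem map_sum_wellPoisedTerm_le_sq {a b : F} {s : ℕ} (h2 : v 2 = 1)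
    (hQ : IsPrimitiveRootMod v γ m Q) (hA : ValModEq v γ (A * Q ^ N) 1) (hN : N < m)
    (ha : IsGenericMod v m a) (hb : IsGenericMod v m b)
    (hQinj : Function.Injective (Q ^ · : ℕ → F)) (hAQ : ∀ k : ℕ, A * Q ^ k ≠ 1)
    (hC : ValModEq v γ C 1) (hAC : A * C = Q ^ (s + 1)) (hsN : 2 * s < N) :
    v (∑ k ∈ range (N + 1), wellPoisedTerm Q A
      (fun X => pairFactor 1 a X * pairFactor 1 b X * pairFactor 1 1 X) k) ≤ γ ^ 2 := by
  have hAroot := hQ.isRootOfUnityMod_of_mul_pow hA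
  have hD : ValModEq v γ (A * Q ^ N)⁻¹ 1 := by
    simpa using hA.inv (hA.symm.map_eq_one hQ.lt_one v.map_one) v.map_one
  have ha' := ha.avoidsArguments hQ hA
  have hb' := hb.avoidsArguments hQ hA
  have h1' := hQ.avoidsArguments_one hA hN
  have hne : ∀ {x : F}, v x = 1 → x ≠ 0 := fun hx => v.ne_zero_iff.1 (by simp [hx])
  have hχ := hasDoubleZeroMod_pairFactor_mul hQ.lt_one ha hb
  have hden : ∀ k, IsRootOfUnityMod v γ m (Q ^ (k + 1))⁻¹ := fun k =>
    (hQ.isRootOfUnityMod.pow (k + 1)).inv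
  have hexact := sum_wellPoisedTerm_eq_zero hQ.ne_zero (hne hAroot.map_eq_one)
    (hne ha.map_eq_one) (hne hb.map_eq_one) hQinj hAQ hAC hsN
    (fun k _ => hne (ha.map_pairFactor hQ.lt_one hC (hden k)))
    (fun k _ => hne (hb.map_pairFactor hQ.lt_one hC (hden k)))
  refine map_sum_le_sq_of_deformation h2 (σ := fun k => weight Q A (deformRatio C a) k *
    weight Q A (deformRatio C b) k * weight Q A (deformRatio (A * Q ^ N)⁻¹ 1) k) ?_
    (fun k hk => ?_) (fun k hk => map_wellPoisedTerm_add_le hQ hA hN hχ hk)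
    (fun k hk => ?_) fun k hk => ?_
  · rw [← hexact]
    refine sum_congr rfl fun k hk => ?_
    have hk : k ≤ N := mem_range_succ_iff.1 hk
    simp only [wellPoisedTerm, weight_mul, ha'.weight_pairFactor_eq_mul C hk,
      hb'.weight_pairFactor_eq_mul C hk,
      h1'.weight_pairFactor_eq_mul (A * Q ^ N)⁻¹ hk]
    ring
  · simpa using (wellPoisedTerm_sub_modEq_neg hQ hA hN hχ hk).right_le_one
  · have hone : ∀ {x D : F}, AvoidsArguments v Q A N x → ValModEq v γ D 1 →
        ValModEq v γ (weight Q A (deformRatio D x) k) 1 := fun hx hD =>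
      hx.weight_deformRatio_modEq_one hQ.map_eq_one hAroot.map_eq_one hQ.lt_one hD hk
    simpa using (((hone ha' hC).mul (hone hb' hC)).mul (hone h1' hD)).symm.sub_le
  · exact (((ha'.weight_deformRatio_sub_modEq hQ hA hC hk).mul
      (hb'.weight_deformRatio_sub_modEq hQ hA hC hk)).mul
      (h1'.weight_deformRatio_sub_modEq hQ hA hD hk)).symm.sub_le

end Deformation

section PrimeValuation

variable {B : Type*} (L : Type*) [CommRing B] [IsDomain B] [UniqueFactorizationMonoid B] [Field L]
  [Algebra B L] [IsFractionRing B L] {p : B}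

theorem mul_algebraMap_den (B : Type*) {L : Type*} [CommRing B] [IsDomain B]
    [UniqueFactorizationMonoid B] [Field L] [Algebra B L] [IsFractionRing B L] (x : L) :
    x * algebraMap B L (IsFractionRing.den B x) = algebraMap B L (IsFractionRing.num B x) :=
  IsFractionRing.num_mul_den_eq_num_iff_eq'.2 rfl

/-- The valuation ring, inside the fraction field `L` of a unique factorisation domain, of the
valuation attached to a prime `p`: the fractions whose denominator is prime to `p`. -/
def primeValuationSubring (hp : Prime p) : ValuationSubring L where
  carrier := {x | ∃ f g : B, ¬ p ∣ g ∧ x * algebraMap B L g = algebraMap B L f}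
  one_mem' := ⟨1, 1, hp.not_dvd_one, by simp⟩
  zero_mem' := ⟨0, 1, hp.not_dvd_one, by simp⟩
  mul_mem' := by
    rintro x y ⟨f, g, hg, hx⟩ ⟨f', g', hg', hy⟩
    exact ⟨f * f', g * g', hp.not_dvd_mul hg hg', by simp only [map_mul, ← hx, ← hy]; ring⟩
  add_mem' := by
    rintro x y ⟨f, g, hg, hx⟩ ⟨f', g', hg', hy⟩
    exact ⟨f * g' + f' * g, g * g', hp.not_dvd_mul hg hg', by
      simp only [map_add, map_mul, ← hx, ← hy]; ring⟩
  neg_mem' := by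
    rintro x ⟨f, g, hg, hx⟩
    exact ⟨-f, g, hg, by rw [map_neg, ← hx, neg_mul]⟩
  mem_or_inv_mem' x := by
    have hx := mul_algebraMap_den B x
    by_cases hden : p ∣ IsFractionRing.den B x
    · refine Or.inr ⟨IsFractionRing.den B x, IsFractionRing.num B x,
        fun hnum => hp.not_isUnit (IsFractionRing.num_den_reduced B x hnum hden), ?_⟩
      rcases eq_or_ne x 0 with rfl | hx0
      · exact absurd (IsFractionRing.num_den_reduced B (0 : L) (by simp) hden) hp.not_isUnit
      · rw [← hx, inv_mul_cancel_left₀ hx0]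
    · exact Or.inl ⟨IsFractionRing.num B x, IsFractionRing.den B x, hden, hx⟩

variable {L}

theorem mem_primeValuationSubring_iff (hp : Prime p) {x : L} :
    x ∈ primeValuationSubring L hp ↔
      ∃ f g : B, ¬ p ∣ g ∧ x * algebraMap B L g = algebraMap B L f :=
  Iff.rfl

theorem primeValuation_algebraMap_le_one (hp : Prime p) (f : B) :
    (primeValuationSubring L hp).valuation (algebraMap B L f) ≤ 1 :=
  ((primeValuationSubring L hp).valuation_le_one_iff _).2 ⟨f, 1, hp.not_dvd_one, by simp⟩

theorem primeValuation_algebraMap_eq_one (hp : Prime p) {f : B} (hf : ¬ p ∣ f) :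
    (primeValuationSubring L hp).valuation (algebraMap B L f) = 1 := by
  have hf0 : algebraMap B L f ≠ 0 := by
    rw [Ne, FaithfulSMul.algebraMap_eq_zero_iff]
    rintro rfl
    exact hf (dvd_zero p)
  refine le_antisymm (primeValuation_algebraMap_le_one hp f) ?_
  rw [← inv_le_one₀ (zero_lt_iff.2 ((map_ne_zero _).2 hf0)), ← map_inv₀]
  exact ((primeValuationSubring L hp).valuation_le_one_iff _).2
    ⟨1, f, hf, by rw [inv_mul_cancel₀ hf0, map_one]⟩

theorem pow_dvd_num_of_primeValuation_le (hp : Prime p) {x : L} {e : ℕ}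
    (hx : (primeValuationSubring L hp).valuation x ≤
      (primeValuationSubring L hp).valuation (algebraMap B L p) ^ e) :
    p ^ e ∣ IsFractionRing.num B x := by
  rw [← map_pow, ValuationSubring.valuation_le_iff] at hx
  obtain ⟨⟨y, hmem⟩, hyx⟩ := hx
  obtain ⟨f, g, hg, hy⟩ := (mem_primeValuationSubring_iff hp).1 hmem
  have hnum : IsFractionRing.num B x * g = p ^ e * (f * IsFractionRing.den B x) := by
    apply IsFractionRing.injective B L
    simp only [map_mul, map_pow]
    linear_combination (-algebraMap B L g) * mul_algebraMap_den B x +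
      algebraMap B L g * algebraMap B L (IsFractionRing.den B x) * hyx.symm +
      algebraMap B L p ^ e * algebraMap B L (IsFractionRing.den B x) * hy
  exact hp.pow_dvd_of_dvd_mul_right e hg ⟨_, hnum⟩

theorem primeValuation_algebraMap_self_lt_one (hp : Prime p) :
    (primeValuationSubring L hp).valuation (algebraMap B L p) < 1 := by
  by_contra! hle
  rw [← map_one (primeValuationSubring L hp).valuation, ValuationSubring.valuation_le_iff] at hle
  obtain ⟨⟨y, hmem⟩, hyp⟩ := hle
  obtain ⟨f, g, hg, hy⟩ := (mem_primeValuationSubring_iff hp).1 hmem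
  refine hg ⟨f, IsFractionRing.injective B L ?_⟩
  rw [map_mul, ← hy, mul_left_comm, ← mul_assoc, hyp, one_mul]

end PrimeValuation

section Cyclotomic

/-- Evaluation of polynomials at `q = z`, with every other variable set to `2`. At a primitive
`m`-th root of unity `z` it kills `Phi m` and so detects that a polynomial is prime to it. -/
def evalAt (z : ℂ) : R →+* ℂ :=
  MvPolynomial.eval₂Hom (algebraMap ℚ ℂ) fun i => if i = 0 then z else 2

theorem evalAt_X_zero (z : ℂ) : evalAt z (MvPolynomial.X 0) = z := by simp [evalAt]

theorem evalAt_X_of_ne_zero (z : ℂ) {i : Fin 4} (hi : i ≠ 0) :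
    evalAt z (MvPolynomial.X i) = 2 := by simp [evalAt, hi]

theorem evalAt_Phi (z : ℂ) (n : ℕ) : evalAt z (Phi n) = (Polynomial.cyclotomic n ℂ).eval z := by
  rw [Phi, Polynomial.hom_eval₂, evalAt_X_zero, ← Polynomial.map_cyclotomic n (algebraMap ℚ ℂ),
    Polynomial.eval_map, RingHom.ext_rat ((evalAt z).comp MvPolynomial.C) (algebraMap ℚ ℂ)]

theorem evalAt_Phi_self {z : ℂ} {m : ℕ} (hm : 0 < m) (hz : IsPrimitiveRoot z m) :
    evalAt z (Phi m) = 0 := by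
  rw [evalAt_Phi]
  exact hz.isRoot_cyclotomic hm

theorem evalAt_Phi_ne_zero {z : ℂ} {m e : ℕ} (he : 0 < e) (hz : IsPrimitiveRoot z m)
    (hem : e ≠ m) : evalAt z (Phi e) ≠ 0 := by
  have : NeZero (e : ℂ) := ⟨by exact_mod_cast he.ne'⟩
  rw [evalAt_Phi]
  exact fun h => hem ((Polynomial.isRoot_cyclotomic_iff.1 h).unique hz)

theorem not_Phi_dvd_of_evalAt_ne_zero {z : ℂ} {m : ℕ} (hm : 0 < m) (hz : IsPrimitiveRoot z m)
    {f : R} (hf : evalAt z f ≠ 0) : ¬ Phi m ∣ f := by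
  rintro ⟨g, rfl⟩
  rw [map_mul, evalAt_Phi_self hm hz, zero_mul] at hf
  exact hf rfl

theorem prime_toMvPolynomial {σ k : Type*} [Field k] (i : σ) {f : Polynomial k} (hf : Prime f) :
    Prime (Polynomial.toMvPolynomial i f) := by
  have hcomp : Polynomial.toMvPolynomial (R := k) i =
      (MvPolynomial.rename ((↑) : ({i} : Set σ) → σ)).comp
        (MvPolynomial.uniqueAlgEquiv k ({i} : Set σ)).symm.toAlgHom := by
    ext
    simp
  rw [hcomp, AlgHom.comp_apply, MvPolynomial.prime_rename_iff]
  exact (MulEquiv.prime_iff (MvPolynomial.uniqueAlgEquiv k ({i} : Set σ)).symm).2 hf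

theorem prime_Phi_s3 {m : ℕ} (hm : 0 < m) : Prime (Phi m) :=
  prime_toMvPolynomial 0 (Polynomial.cyclotomic.irreducible_rat hm).prime

theorem isRelPrime_Phi {i j : ℕ} (hi : 0 < i) (hj : 0 < j) (hij : i ≠ j) :
    IsRelPrime (Phi i) (Phi j) := by
  have hz := Complex.isPrimitiveRoot_exp i hi.ne'
  exact (prime_Phi_s3 hi).irreducible.isRelPrime_iff_not_dvd.2
    (not_Phi_dvd_of_evalAt_ne_zero hi hz (evalAt_Phi_ne_zero hj hz hij.symm))

theorem prod_Phi_divisors {k : ℕ} (hk : 0 < k) :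
    ∏ e ∈ k.divisors, Phi e = MvPolynomial.X 0 ^ k - 1 := by
  simp only [Phi, ← Polynomial.eval₂_finsetProd, Polynomial.prod_cyclotomic_eq_X_pow_sub_one hk,
    Polynomial.eval₂_sub, Polynomial.eval₂_X_pow, Polynomial.eval₂_one]

theorem prod_Phi_divisors_erase_one {n : ℕ} (hn : 0 < n) :
    ∏ m ∈ n.divisors.erase 1, Phi m = qintR n := by
  simp only [Phi, qintR, ← Polynomial.eval₂_finsetProd,
    Polynomial.prod_cyclotomic_eq_geom_sum hn, Polynomial.eval₂_finsetSum, Polynomial.eval₂_X_pow]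

theorem qintR_mul_Phi {n : ℕ} (hn : 1 < n) :
    qintR n * Phi n = ∏ m ∈ n.divisors.erase 1, Phi m ^ (if m = n then 2 else 1) := by
  have hmem : n ∈ n.divisors.erase 1 := by simp; omega
  have hproper : ∏ m ∈ (n.divisors.erase 1).erase n, Phi m ^ (if m = n then 2 else 1) =
      ∏ m ∈ (n.divisors.erase 1).erase n, Phi m :=
    prod_congr rfl fun m hm => by rw [if_neg (mem_erase.1 hm).1, pow_one]
  rw [← prod_Phi_divisors_erase_one (by omega), ← mul_prod_erase _ _ hmem,
    ← mul_prod_erase _ (fun m => Phi m ^ _) hmem, hproper, if_pos rfl]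
  ring

theorem modCong_of_dvd_num {D : R} {x : K} (h : D ∣ IsFractionRing.num R x) : modCong D x := by
  obtain ⟨f, hf⟩ := h
  refine ⟨f, IsFractionRing.den R x, nonZeroDivisors.ne_zero (IsFractionRing.den R x).2, ?_, ?_⟩
  · exact fun p hp hpD hpden => hp.not_isUnit
      (IsFractionRing.num_den_reduced R x (hpD.trans ⟨f, hf⟩) hpden)
  · rw [← hf, mul_algebraMap_den]

theorem modCong_qintR_mul_Phi {n : ℕ} (hn : 1 < n) {x : K}
    (h : ∀ m, 1 < m → m ∣ n → Phi m ^ (if m = n then 2 else 1) ∣ IsFractionRing.num R x) :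
    modCong (qintR n * Phi n) x := by
  refine modCong_of_dvd_num ?_
  rw [qintR_mul_Phi hn]
  have hpos : ∀ m ∈ n.divisors.erase 1, 0 < m := fun m hm =>
    Nat.pos_of_mem_divisors (mem_of_mem_erase hm)
  refine Finset.prod_dvd_of_isRelPrime
    (fun i hi j hj hij => (isRelPrime_Phi (hpos i hi) (hpos j hj) hij).pow) fun m hm => ?_
  have hm1 : m ≠ 1 := (mem_erase.1 hm).1
  have hm0 := hpos m hm
  exact h m (by omega) (Nat.dvd_of_mem_divisors (mem_of_mem_erase hm))

/-- The `Phi m`-adic valuation of the field of rational functions. -/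
def cyclotomicValuation {m : ℕ} (hm : 0 < m) :
    Valuation K (primeValuationSubring K (prime_Phi_s3 hm)).ValueGroup :=
  (primeValuationSubring K (prime_Phi_s3 hm)).valuation

section Valuation

variable {m : ℕ} (hm : 0 < m)

theorem cyclotomicValuation_eq_one_of_evalAt_ne_zero {z : ℂ} (hz : IsPrimitiveRoot z m) {f : R}
    (hf : evalAt z f ≠ 0) : cyclotomicValuation hm (algebraMap R K f) = 1 :=
  primeValuation_algebraMap_eq_one _ (not_Phi_dvd_of_evalAt_ne_zero hm hz hf)

theorem cyclotomicValuation_two : cyclotomicValuation hm 2 = 1 := by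
  have hz := Complex.isPrimitiveRoot_exp m hm.ne'
  rw [← map_ofNat (algebraMap R K) 2]
  refine cyclotomicValuation_eq_one_of_evalAt_ne_zero hm hz ?_
  rw [map_ofNat]
  exact two_ne_zero

theorem isGenericMod_X {i : Fin 4} (hi : i ≠ 0) :
    IsGenericMod (cyclotomicValuation hm) m (algebraMap R K (MvPolynomial.X i)) := by
  have hz := Complex.isPrimitiveRoot_exp m hm.ne'
  refine ⟨cyclotomicValuation_eq_one_of_evalAt_ne_zero hm hz ?_, ?_⟩
  · rw [evalAt_X_of_ne_zero _ hi]
    exact two_ne_zero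
  · rw [← map_one (algebraMap R K), ← map_pow, ← map_sub]
    refine cyclotomicValuation_eq_one_of_evalAt_ne_zero hm hz ?_
    rw [map_sub, map_one, map_pow, evalAt_X_of_ne_zero _ hi, sub_ne_zero]
    exact_mod_cast (one_lt_two.trans_le (Nat.pow_le_pow_right two_pos hm)).ne

theorem one_sub_qv_pow (j : ℕ) : 1 - qv ^ j = algebraMap R K (1 - MvPolynomial.X 0 ^ j) := by
  simp [qv]

theorem cyclotomicValuation_one_sub_qv_pow_of_dvd {j : ℕ} (hj : j ≠ 0) (hmj : m ∣ j) :
    cyclotomicValuation hm (1 - qv ^ j) = cyclotomicValuation hm (algebraMap R K (Phi m)) := by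
  obtain ⟨z, hz⟩ : ∃ z : ℂ, IsPrimitiveRoot z m := ⟨_, Complex.isPrimitiveRoot_exp m hm.ne'⟩
  have hother : evalAt z (∏ e ∈ j.divisors.erase m, Phi e) ≠ 0 := by
    rw [map_prod]
    exact prod_ne_zero_iff.2 fun e he => evalAt_Phi_ne_zero
      (Nat.pos_of_mem_divisors (mem_of_mem_erase he)) hz (ne_of_mem_erase he)
  rw [one_sub_qv_pow, ← neg_sub (MvPolynomial.X 0 ^ j), map_neg, Valuation.map_neg,
    ← prod_Phi_divisors (Nat.pos_of_ne_zero hj),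
    ← mul_prod_erase _ _ (Nat.mem_divisors.2 ⟨hmj, hj⟩), map_mul, map_mul,
    cyclotomicValuation_eq_one_of_evalAt_ne_zero hm hz hother, mul_one]

theorem isPrimitiveRootMod_qv :
    IsPrimitiveRootMod (cyclotomicValuation hm)
      (cyclotomicValuation hm (algebraMap R K (Phi m))) m qv := by
  have hz := Complex.isPrimitiveRoot_exp m hm.ne'
  refine ⟨primeValuation_algebraMap_self_lt_one _, ?_, fun j hj => ?_,
    fun j => cyclotomicValuation_one_sub_qv_pow_of_dvd hm⟩
  · refine cyclotomicValuation_eq_one_of_evalAt_ne_zero hm hz ?_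
    rw [evalAt_X_zero]
    exact hz.ne_zero hm.ne'
  · rw [one_sub_qv_pow]
    refine cyclotomicValuation_eq_one_of_evalAt_ne_zero hm hz ?_
    rw [map_sub, map_one, map_pow, evalAt_X_zero, sub_ne_zero]
    exact fun h => hj (hz.dvd_of_pow_eq_one j h.symm)

end Valuation

end Cyclotomic

section Summand

theorem qv_pow_injective : Function.Injective (qv ^ · : ℕ → K) := by
  intro i j hij
  simp only [qv, ← map_pow] at hij
  have heval := congrArg (MvPolynomial.eval fun _ => (2 : ℚ)) (IsFractionRing.injective R K hij)
  simp only [map_pow, MvPolynomial.eval_X] at heval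
  exact pow_right_injective₀ two_pos (by norm_num) heval

theorem qv_zpow_ne_one {j : ℤ} (hj : j ≠ 0) : qv ^ j ≠ 1 := by
  have hnat : ∀ k : ℕ, k ≠ 0 → qv ^ k ≠ 1 := fun k hk h =>
    hk (qv_pow_injective (h.trans (pow_zero qv).symm))
  obtain ⟨k, rfl | rfl⟩ := j.eq_nat_or_neg
  · rw [zpow_natCast]
    exact hnat k (by simpa using hj)
  · rw [zpow_neg, zpow_natCast, Ne, inv_eq_one]
    exact hnat k (by simpa using hj)

/-- The `k`-th summand of the theorem. -/
def congruenceSummand (d : ℕ) (r : ℤ) (k : ℕ) : K :=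
  qint (2 * d * k + r) *
    (poch (av * qv ^ r) (qv ^ (d : ℤ)) k * poch (qv ^ r / av) (qv ^ (d : ℤ)) k *
      poch (bv * qv ^ r) (qv ^ (d : ℤ)) k * poch (qv ^ r / bv) (qv ^ (d : ℤ)) k *
      poch (qv ^ r) (qv ^ (d : ℤ)) k * poch (qv ^ r) (qv ^ (d : ℤ)) k) /
    (poch (av * qv ^ (d : ℤ)) (qv ^ (d : ℤ)) k * poch (qv ^ (d : ℤ) / av) (qv ^ (d : ℤ)) k *
      poch (bv * qv ^ (d : ℤ)) (qv ^ (d : ℤ)) k * poch (qv ^ (d : ℤ) / bv) (qv ^ (d : ℤ)) k *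
      poch (qv ^ (d : ℤ)) (qv ^ (d : ℤ)) k * poch (qv ^ (d : ℤ)) (qv ^ (d : ℤ)) k) *
    qv ^ ((2 * d - 3 * r) * k)

theorem pairFactor_one_inv {F : Type*} [Field F] {x Y : F} (hx : x ≠ 0) (hY : Y ≠ 0) :
    pairFactor 1 x Y⁻¹ = pairFactor 1 x Y := by
  unfold pairFactor
  field_simp
  ring

theorem weight_pairFactor_eq_poch {Q A x : K} (hQ : Q ≠ 0) (hx : x ≠ 0) (k : ℕ) :
    weight Q A (pairFactor 1 x) k =
      poch (x * A) Q k * poch (A / x) Q k / (poch (x * Q) Q k * poch (Q / x) Q k) *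
        (Q / A) ^ k := by
  have hpow : (Q / A) ^ k = ∏ _i ∈ range k, Q / A := by rw [prod_const, card_range]
  simp only [weight, poch, hpow, ← prod_mul_distrib, ← prod_div_distrib]
  refine prod_congr rfl fun i _ => ?_
  have hratio : A * Q ^ i / Q ^ (i + 1) = (Q / A)⁻¹ := by
    rw [pow_succ', mul_div_mul_right _ _ (pow_ne_zero i hQ), inv_div]
  rw [pairFactor_one_inv hx (pow_ne_zero _ hQ), pairFactor, pairFactor, div_div_div_comm, hratio,
    div_inv_eq_mul]
  congr 2 <;> ring

theorem one_sub_zpow_mul_zpow {F : Type*} [Field F] {q : F} (hq : q ≠ 0) (d : ℕ) (r : ℤ)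
    (k : ℕ) :
    (1 - q ^ (2 * d * k + r)) * q ^ ((2 * d - 3 * r) * k) =
      (((q ^ d) ^ k)⁻¹ - q ^ r * (q ^ d) ^ k) * ((q ^ d / q ^ r) ^ k) ^ 3 := by
  have hlead : q ^ (2 * d * k + r) = q ^ r * ((q ^ d) ^ k) ^ 2 := by
    rw [zpow_add₀ hq, mul_comm, ← pow_mul, ← pow_mul, ← zpow_natCast q]
    push_cast
    ring_nf
  have hpow : q ^ ((2 * d - 3 * r) * k) = ((q ^ d) ^ k) ^ 2 / ((q ^ r) ^ k) ^ 3 := by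
    rw [sub_mul, zpow_sub₀ hq, ← pow_mul, ← pow_mul, ← pow_mul, ← zpow_natCast q,
      ← zpow_natCast (q ^ r), ← zpow_mul]
    push_cast
    ring_nf
  rw [hlead, hpow, div_pow]
  field_simp

theorem congruenceSummand_eq (d : ℕ) (r : ℤ) (k : ℕ) :
    congruenceSummand d r k = (1 - qv)⁻¹ * wellPoisedTerm (qv ^ d) (qv ^ r)
      (fun X => pairFactor 1 av X * pairFactor 1 bv X * pairFactor 1 1 X) k := by
  have hQ : qv ^ d ≠ 0 := pow_ne_zero _ qv_ne_zero
  have hX : ∀ i : Fin 4, algebraMap R K (MvPolynomial.X i) ≠ 0 := fun i =>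
    (map_ne_zero_iff _ (IsFractionRing.injective R K)).2 (MvPolynomial.X_ne_zero i)
  have ha : av ≠ 0 := hX 1
  have hb : bv ≠ 0 := hX 2
  have hregroup (u w N D z : K) : u / w * N / D * z = w⁻¹ * (N / D) * (u * z) := by ring
  rw [wellPoisedTerm, weight_mul, weight_mul, weight_pairFactor_eq_poch hQ ha,
    weight_pairFactor_eq_poch hQ hb, weight_pairFactor_eq_poch hQ one_ne_zero,
    congruenceSummand, qint, hregroup, one_sub_zpow_mul_zpow qv_ne_zero]
  simp only [zpow_natCast, one_mul, div_one]
  ring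

end Summand

section Assembly

variable {n d t m : ℕ} {r : ℤ}

theorem qv_zpow_mul_pow (ht : (n : ℤ) + r = d * t) (htn : t ≤ n) (hd : 0 < d) :
    qv ^ r * (qv ^ d) ^ (n - t) = qv ^ (n * (d - 1)) := by
  have hexp : r + ((d * (n - t) : ℕ) : ℤ) = ((n * (d - 1) : ℕ) : ℤ) := by
    push_cast [htn, Nat.one_le_iff_ne_zero.2 hd.ne']
    linear_combination ht
  rw [← pow_mul, ← zpow_natCast qv, ← zpow_natCast qv, ← zpow_add₀ qv_ne_zero, hexp]

theorem qv_zpow_mul_pow_modEq_one (hm : 0 < m) (hmn : m ∣ n) (ht : (n : ℤ) + r = d * t)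
    (htn : t ≤ n) (hd : 0 < d) :
    ValModEq (cyclotomicValuation hm) (cyclotomicValuation hm (algebraMap R K (Phi m)))
      (qv ^ r * (qv ^ d) ^ (n - t)) 1 := by
  rw [qv_zpow_mul_pow ht htn hd]
  exact (isPrimitiveRootMod_qv hm).pow_modEq_one (hmn.mul_right _)

theorem qv_zpow_mul_pow_ne_one (hd : 1 < d) (hnd : n.Coprime d) (ht : (n : ℤ) + r = d * t)
    (k : ℕ) : qv ^ r * (qv ^ d) ^ k ≠ 1 := by
  rw [← pow_mul, ← zpow_natCast qv, ← zpow_add₀ qv_ne_zero]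
  refine qv_zpow_ne_one fun h => hd.ne' (Nat.eq_one_of_dvd_coprimes hnd ?_ dvd_rfl)
  rw [← Int.natCast_dvd_natCast]
  exact ⟨t + k, by push_cast at h; linear_combination ht - h⟩

theorem cyclotomicValuation_sum_le (hm : 0 < m) (hmn : m ∣ n) (hd : 0 < d) (hnd : n.Coprime d)
    (ht : (n : ℤ) + r = d * t) (htn : t ≤ n) {l : ℕ} (hl : l = n - t + 1 ∨ l = n) :
    cyclotomicValuation hm (∑ k ∈ range l, wellPoisedTerm (qv ^ d) (qv ^ r)
      (fun X => pairFactor 1 av X * pairFactor 1 bv X * pairFactor 1 1 X) k) ≤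
      cyclotomicValuation hm (algebraMap R K (Phi m)) := by
  have h2 := cyclotomicValuation_two hm
  have hQ := (isPrimitiveRootMod_qv hm).pow_of_coprime hd.ne' (hnd.coprime_dvd_left hmn)
  have hA := hQ.mul_pow_mod_modEq_one (qv_zpow_mul_pow_modEq_one hm hmn ht htn hd)
  have hN := Nat.mod_lt (n - t) hm
  have hχ := hasDoubleZeroMod_pairFactor_mul hQ.lt_one (isGenericMod_X hm (i := 1) (by decide))
    (isGenericMod_X hm (i := 2) (by decide))
  rcases hl with rfl | rfl
  · rw [← Nat.div_add_mod' (n - t) m]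
    exact map_sum_wellPoisedTerm_mul_add_le h2 hQ hA hN hχ _
  · rw [← Nat.div_mul_cancel hmn]
    exact map_sum_wellPoisedTerm_mul_le h2 hQ hA hN hχ _

theorem cyclotomicValuation_sum_le_sq (hn : 0 < n) (hd : 1 < d) (hnd : n.Coprime d)
    (ht : (n : ℤ) + r = d * t) (ht0 : 0 < t) (htn : 3 * t ≤ n + 1) {l : ℕ}
    (hl : l = n - t + 1 ∨ l = n) :
    cyclotomicValuation hn (∑ k ∈ range l, wellPoisedTerm (qv ^ d) (qv ^ r)
      (fun X => pairFactor 1 av X * pairFactor 1 bv X * pairFactor 1 1 X) k) ≤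
      cyclotomicValuation hn (algebraMap R K (Phi n)) ^ 2 := by
  have hq := isPrimitiveRootMod_qv hn
  have hQ := hq.pow_of_coprime (by omega) hnd
  have hA := qv_zpow_mul_pow_modEq_one hn dvd_rfl ht (by omega) (by omega)
  have ha := isGenericMod_X hn (i := 1) (by decide)
  have hb := isGenericMod_X hn (i := 2) (by decide)
  have hQinj : Function.Injective ((qv ^ d) ^ · : ℕ → K) := by
    simpa only [← pow_mul, Function.comp_def] using
      qv_pow_injective.comp (mul_right_injective₀ (by omega))
  have hAC : qv ^ r * qv ^ n = (qv ^ d) ^ (t - 1 + 1) := by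
    rw [Nat.sub_add_cancel ht0, ← pow_mul, ← zpow_natCast, ← zpow_natCast,
      ← zpow_add₀ qv_ne_zero, add_comm, ht, Nat.cast_mul]
  have hsq := map_sum_wellPoisedTerm_le_sq (cyclotomicValuation_two hn) hQ hA (by omega) ha hb
    hQinj (qv_zpow_mul_pow_ne_one hd hnd ht) (hq.pow_modEq_one dvd_rfl) hAC (by omega)
  obtain rfl | rfl := hl
  · exact hsq
  · exact map_sum_wellPoisedTerm_le_of_le hQ hA (by omega)
      (hasDoubleZeroMod_pairFactor_mul hQ.lt_one ha hb) le_rfl hsq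

theorem modCong_sum_congruenceSummand (hn : 1 < n) (hd : 1 < d) (hnd : n.Coprime d)
    (ht : (n : ℤ) + r = d * t) (ht0 : 0 < t) (htn : 3 * t ≤ n + 1) {l : ℕ}
    (hl : l = n - t + 1 ∨ l = n) :
    modCong (qintR n * Phi n) (∑ k ∈ range l, congruenceSummand d r k) := by
  simp only [congruenceSummand_eq, ← mul_sum]
  refine modCong_qintR_mul_Phi hn fun m hm hmn => ?_
  have hm0 : 0 < m := by omega
  refine pow_dvd_num_of_primeValuation_le (prime_Phi_s3 hm0) ?_
  change cyclotomicValuation hm0 _ ≤ cyclotomicValuation hm0 _ ^ _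
  have hone_sub : cyclotomicValuation hm0 (1 - qv) = 1 := by
    simpa using (isPrimitiveRootMod_qv hm0).map_one_sub_pow_of_not_dvd 1 (by simpa using hm.ne')
  rw [map_mul, map_inv₀, hone_sub, inv_one, one_mul]
  split_ifs with hmn'
  · subst hmn'
    exact cyclotomicValuation_sum_le_sq hm0 hd hnd ht ht0 htn hl
  · rw [pow_one]
    exact cyclotomicValuation_sum_le hm0 hmn (by omega) hnd ht (by omega) hl

end Assembly

theorem stmt3_general (r : ℤ) (n d : ℕ) (hn : 1 < n) (hd : 1 < d) (hnd : Nat.gcd n d = 1)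
    (hmod : (n : ℤ) ≡ -r [ZMOD (d : ℤ)]) (hpos : 0 < n + r) (hle : 3 * (n + r) ≤ d * (n + 1))
    (M : ℕ) (hM : (M : ℤ) = ((d : ℤ) * n - n - r) / d ∨ M = n - 1) :
    modCong (qintR n * Phi n) (∑ k ∈ range (M + 1), congruenceSummand d r k) := by
  have hd0 : (0 : ℤ) < d := by omega
  obtain ⟨t, ht⟩ : (d : ℤ) ∣ n + r := by simpa using hmod.symm.dvd
  rw [ht] at hpos hle
  lift t to ℕ using (pos_of_mul_pos_right hpos hd0.le).le
  have ht0 : 0 < t := by exact_mod_cast pos_of_mul_pos_right hpos hd0.le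
  have htn : 3 * t ≤ n + 1 := by
    exact_mod_cast le_of_mul_le_mul_left (by linarith : (d : ℤ) * (3 * t) ≤ d * (n + 1)) hd0
  have hquot : ((d : ℤ) * n - n - r) / d = n - t :=
    Int.ediv_eq_of_eq_mul_right hd0.ne' (by linear_combination -ht)
  exact modCong_sum_congruenceSummand hn hd hnd ht ht0 htn (by omega)

theorem stmt3 (r : ℤ) (hr : r = 1 ∨ r = -1) (n d : ℕ) (hn : 1 < n) (hd : 3 ≤ d)
    (hnd : Nat.gcd n d = 1) (hmod : (n : ℤ) ≡ -r [ZMOD (d : ℤ)])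
    (M : ℕ) (hM : (M : ℤ) = ((d : ℤ) * n - n - r) / d ∨ M = n - 1) :
    modCong (qintR n * Phi n)
      (∑ k ∈ Finset.range (M + 1),
        qint (2 * d * k + r) *
          (poch (av * qv ^ r) (qv ^ (d : ℤ)) k * poch (qv ^ r / av) (qv ^ (d : ℤ)) k *
            poch (bv * qv ^ r) (qv ^ (d : ℤ)) k * poch (qv ^ r / bv) (qv ^ (d : ℤ)) k *
            poch (qv ^ r) (qv ^ (d : ℤ)) k * poch (qv ^ r) (qv ^ (d : ℤ)) k) /
          (poch (av * qv ^ (d : ℤ)) (qv ^ (d : ℤ)) k * poch (qv ^ (d : ℤ) / av) (qv ^ (d : ℤ)) k *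
            poch (bv * qv ^ (d : ℤ)) (qv ^ (d : ℤ)) k * poch (qv ^ (d : ℤ) / bv) (qv ^ (d : ℤ)) k *
            poch (qv ^ (d : ℤ)) (qv ^ (d : ℤ)) k * poch (qv ^ (d : ℤ)) (qv ^ (d : ℤ)) k) *
          qv ^ ((2 * d - 3 * r) * k)) := by
  have hpos : 0 < n + r := by omega
  have hle : 3 * (n + r) ≤ d * (n + 1) := mul_le_mul (by omega) (by omega) hpos.le (by omega)
  exact stmt3_general r n d hn (by omega) hnd hmod hpos hle M hM

end
end
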